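/- arXiv:1905.10772 — 3 statements merged into one kernel-verified Lean document; each statement's English description precedes it below -/
import Mathlib

section
/- Let β ∈ K with β ≠ 0, let λ ∈ F with λ ≠ 0 and λ ≠ 1, and let α ∈ K satisfy α^q = λ β^{q+1}. If λ^5 N(β)^2 + λ(1 − 3λ) N(β) + 1 = 0, then L_{α,β} is maximum scattered. -/
/-- Plücker relation combined with the linear condition. -/
lemma quad_aux {K : Type*} [Field K] (d0 d1 d2 e0 e1 e3 b0 b1 b2 b3 b4 u0 u1 u2 u3 u4 l : K)
    (hP : d0 * d2 - e0 * e1 - e3 * d1 = 0)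
    (h0 : d0 = b0 * u0) (h1 : d1 = b1 * u1) (h2 : d2 = b2 * u2)
    (he0 : e0 = u0 + l * b4 * b1 * u1) (he1 : e1 = u1 + l * b0 * b2 * u2)
    (he3 : e3 = u3 + l * b2 * b4 * u4) :
    (1 - l) * b0 * b2 * u0 * u2 - u0 * u1 - l * b4 * b1 * u1 ^ 2
      - l ^ 2 * b4 * b1 * b0 * b2 * u1 * u2 - b1 * u1 * u3 - l * b1 * b2 * b4 * u1 * u4
      + l * (b0 * b2 * u0 * u2 - b0 * b2 * u0 * u2) = 0 := by
  subst h0 h1 h2 he0 he1 he3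
  linear_combination hP

/-- The combination of the five quadrics that splits into linear forms. -/
lemma split_aux {K : Type*} [Field K] (b0 b1 b2 b3 b4 u0 u1 u2 u3 u4 l t s : K)
    (hs : s = 1 - t) (hl : l = t * s)
    (hN : b0 * b1 * b2 * b3 * b4 * t * s ^ 4 = -1)
    (Q0 : (1 - l) * b0 * b2 * u0 * u2 - u0 * u1 - l * b4 * b1 * u1 ^ 2
      - l ^ 2 * b4 * b1 * b0 * b2 * u1 * u2 - b1 * u1 * u3 - l * b1 * b2 * b4 * u1 * u4 = 0)
    (Q1 : (1 - l) * b1 * b3 * u1 * u3 - u1 * u2 - l * b0 * b2 * u2 ^ 2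
      - l ^ 2 * b0 * b2 * b1 * b3 * u2 * u3 - b2 * u2 * u4 - l * b2 * b3 * b0 * u2 * u0 = 0)
    (Q2 : (1 - l) * b2 * b4 * u2 * u4 - u2 * u3 - l * b1 * b3 * u3 ^ 2
      - l ^ 2 * b1 * b3 * b2 * b4 * u3 * u4 - b3 * u3 * u0 - l * b3 * b4 * b1 * u3 * u1 = 0)
    (Q3 : (1 - l) * b3 * b0 * u3 * u0 - u3 * u4 - l * b2 * b4 * u4 ^ 2
      - l ^ 2 * b2 * b4 * b3 * b0 * u4 * u0 - b4 * u4 * u1 - l * b4 * b0 * b2 * u4 * u2 = 0)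
    (Q4 : (1 - l) * b4 * b1 * u4 * u1 - u4 * u0 - l * b3 * b0 * u0 ^ 2
      - l ^ 2 * b3 * b0 * b4 * b1 * u0 * u1 - b0 * u0 * u2 - l * b0 * b1 * b3 * u0 * u3 = 0) :
    (t * u0 - s ^ 2 * b4 * b1 * u1 + s ^ 5 * b4 * b1 * b0 * b2 * u2 - s ^ 2 * b1 * u3
        - t * s ^ 3 * b1 * b2 * b4 * u4) *
      (t * u2 - s ^ 2 * b1 * b3 * u3 + s ^ 5 * b1 * b3 * b2 * b4 * u4 - s ^ 2 * b3 * u0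
        - t * s ^ 3 * b3 * b4 * b1 * u1) = 0 := by
  have hb0 : b0 ≠ 0 := by rintro rfl; simp at hN
  have hb1 : b1 ≠ 0 := by rintro rfl; simp at hN
  have hb2 : b2 ≠ 0 := by rintro rfl; simp at hN
  have hb4 : b4 ≠ 0 := by rintro rfl; simp at hN
  have ht : t ≠ 0 := by rintro rfl; simp at hN
  have hs0 : s ≠ 0 := by rintro h; simp [h] at hN
  have hb3 : b3 = - (b0 * b1 * b2 * b4 * t * s ^ 4)⁻¹ := by
    field_simp
    linear_combination hN
  have ht2 : t = 1 - s := by rw [hs]; ring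
  rw [← sub_eq_zero] at hN
  have key : (t * u0 - s ^ 2 * b4 * b1 * u1 + s ^ 5 * b4 * b1 * b0 * b2 * u2 - s ^ 2 * b1 * u3
        - t * s ^ 3 * b1 * b2 * b4 * u4) *
      (t * u2 - s ^ 2 * b1 * b3 * u3 + s ^ 5 * b1 * b3 * b2 * b4 * u4 - s ^ 2 * b3 * u0
        - t * s ^ 3 * b3 * b4 * b1 * u1)
      = -s ^ 4 * b1 * b3 * b4 * ((1 - l) * b0 * b2 * u0 * u2 - u0 * u1 - l * b4 * b1 * u1 ^ 2
      - l ^ 2 * b4 * b1 * b0 * b2 * u1 * u2 - b1 * u1 * u3 - l * b1 * b2 * b4 * u1 * u4)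
      - s ^ 4 * b1 * b4 * ((1 - l) * b1 * b3 * u1 * u3 - u1 * u2 - l * b0 * b2 * u2 ^ 2
      - l ^ 2 * b0 * b2 * b1 * b3 * u2 * u3 - b2 * u2 * u4 - l * b2 * b3 * b0 * u2 * u0)
      - s ^ 3 * b1 / t * ((1 - l) * b2 * b4 * u2 * u4 - u2 * u3 - l * b1 * b3 * u3 ^ 2
      - l ^ 2 * b1 * b3 * b2 * b4 * u3 * u4 - b3 * u3 * u0 - l * b3 * b4 * b1 * u3 * u1)
      + s ^ 7 * b1 ^ 2 * b2 * b3 * b4 * ((1 - l) * b3 * b0 * u3 * u0 - u3 * u4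
      - l * b2 * b4 * u4 ^ 2
      - l ^ 2 * b2 * b4 * b3 * b0 * u4 * u0 - b4 * u4 * u1 - l * b4 * b0 * b2 * u4 * u2)
      + s / b0 * ((1 - l) * b4 * b1 * u4 * u1 - u4 * u0 - l * b3 * b0 * u0 ^ 2
      - l ^ 2 * b3 * b0 * b4 * b1 * u0 * u1 - b0 * u0 * u2 - l * b0 * b1 * b3 * u0 * u3) := by
    rw [hb3, hl]
    clear hb3 hl hN Q0 Q1 Q2 Q3 Q4
    field_simp
    subst hs
    ring
  rw [key, Q0, Q1, Q2, Q3, Q4]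
  ring

lemma inv_aux {K : Type*} [Field K] (b0 b1 b2 b3 b4 u0 u1 u2 u3 u4 l t s : K)
    (hs : s = 1 - t) (hl : l = t * s) (hl1 : l ≠ 1)
    (hN : b0 * b1 * b2 * b3 * b4 * t * s ^ 4 = -1)
    (Z0 : t * u0 - s ^ 2 * b4 * b1 * u1 + s ^ 5 * b4 * b1 * b0 * b2 * u2 - s ^ 2 * b1 * u3
        - t * s ^ 3 * b1 * b2 * b4 * u4 = 0)
    (Z1 : t * u1 - s ^ 2 * b0 * b2 * u2 + s ^ 5 * b0 * b2 * b1 * b3 * u3 - s ^ 2 * b2 * u4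
        - t * s ^ 3 * b2 * b3 * b0 * u0 = 0)
    (Z2 : t * u2 - s ^ 2 * b1 * b3 * u3 + s ^ 5 * b1 * b3 * b2 * b4 * u4 - s ^ 2 * b3 * u0
        - t * s ^ 3 * b3 * b4 * b1 * u1 = 0)
    (Z3 : t * u3 - s ^ 2 * b2 * b4 * u4 + s ^ 5 * b2 * b4 * b3 * b0 * u0 - s ^ 2 * b4 * u1
        - t * s ^ 3 * b4 * b0 * b2 * u2 = 0)
    (Z4 : t * u4 - s ^ 2 * b3 * b0 * u0 + s ^ 5 * b3 * b0 * b4 * b1 * u1 - s ^ 2 * b0 * u2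
        - t * s ^ 3 * b0 * b1 * b3 * u3 = 0) : u0 = 0 := by
  have hb0 : b0 ≠ 0 := by rintro rfl; simp at hN
  have hb1 : b1 ≠ 0 := by rintro rfl; simp at hN
  have hb2 : b2 ≠ 0 := by rintro rfl; simp at hN
  have hb4 : b4 ≠ 0 := by rintro rfl; simp at hN
  have ht : t ≠ 0 := by rintro rfl; simp at hN
  have hs0 : s ≠ 0 := by rintro h; simp [h] at hN
  have hb3 : b3 = - (b0 * b1 * b2 * b4 * t * s ^ 4)⁻¹ := by
    field_simp
    linear_combination hN
  have key : (1 - l) * u0 = t ^ 2 * (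
      (t * u0 - s ^ 2 * b4 * b1 * u1 + s ^ 5 * b4 * b1 * b0 * b2 * u2 - s ^ 2 * b1 * u3
        - t * s ^ 3 * b1 * b2 * b4 * u4)
      - 1 / (t * s ^ 2 * b2 * b3 * b0) *
      (t * u1 - s ^ 2 * b0 * b2 * u2 + s ^ 5 * b0 * b2 * b1 * b3 * u3 - s ^ 2 * b2 * u4
        - t * s ^ 3 * b2 * b3 * b0 * u0)
      - 1 / (t * b3) *
      (t * u2 - s ^ 2 * b1 * b3 * u3 + s ^ 5 * b1 * b3 * b2 * b4 * u4 - s ^ 2 * b3 * u0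
        - t * s ^ 3 * b3 * b4 * b1 * u1)
      + 1 / (t ^ 2 * s ^ 2 * b2 * b4 * b3 * b0) *
      (t * u3 - s ^ 2 * b2 * b4 * u4 + s ^ 5 * b2 * b4 * b3 * b0 * u0 - s ^ 2 * b4 * u1
        - t * s ^ 3 * b4 * b0 * b2 * u2)
      - 1 / (t * s * b3 * b0) *
      (t * u4 - s ^ 2 * b3 * b0 * u0 + s ^ 5 * b3 * b0 * b4 * b1 * u1 - s ^ 2 * b0 * u2
        - t * s ^ 3 * b0 * b1 * b3 * u3)) := by
    rw [hb3, hl]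
    clear hb3 hl hN Z0 Z1 Z2 Z3 Z4
    field_simp
    subst hs
    ring
  rw [Z0, Z1, Z2, Z3, Z4] at key
  have h1 : (1 - l) ≠ 0 := sub_ne_zero.mpr (Ne.symm hl1)
  have : (1 - l) * u0 = 0 := by rw [key]; ring
  exact (mul_eq_zero.mp this).resolve_left h1

lemma core_aux {K : Type*} [Field K] (σ : K →+* K) (h5 : ∀ x, σ (σ (σ (σ (σ x)))) = x)
    (β l α : K) (hβ : β ≠ 0) (hl : σ l = l) (hl0 : l ≠ 0) (hl1 : l ≠ 1)
    (hα : σ α = l * (σ β * β))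
    (hsh : l ^ 5 * (β * σ β * σ (σ β) * σ (σ (σ β)) * σ (σ (σ (σ β)))) ^ 2 +
        l * (1 - 3 * l) * (β * σ β * σ (σ β) * σ (σ (σ β)) * σ (σ (σ (σ β)))) + 1 = 0)
    (x y : K)
    (hdet : (x - α * σ (σ x)) * (σ y - β * σ (σ y)) - (σ x - β * σ (σ x)) * (y - α * σ (σ y)) = 0) :
    x * σ y - σ x * y = 0 := by
  have hα' : α = l * (β * σ (σ (σ (σ β)))) := by
    apply σ.injective
    rw [hα, map_mul, map_mul, h5, hl]
  -- norm
  obtain ⟨N, hNdef⟩ : ∃ N, N = β * σ β * σ (σ β) * σ (σ (σ β)) * σ (σ (σ (σ β))) := ⟨_, rfl⟩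
  have hNσ : σ N = N := by
    rw [hNdef]; simp only [map_mul, h5]; ring
  rw [← hNdef] at hsh
  have h1l : (1 - l) ≠ 0 := sub_ne_zero.mpr (Ne.symm hl1)
  obtain ⟨t, htdef⟩ : ∃ t, t = (l - N * l ^ 4) / (1 - l) := ⟨_, rfl⟩
  have htσ : σ t = t := by
    rw [htdef]; simp only [map_div₀, map_sub, map_mul, map_pow, map_one, hl, hNσ]
  have ht1 : t * (1 - l) = l - N * l ^ 4 := by rw [htdef]; field_simp
  obtain ⟨s, hs⟩ : ∃ s, s = 1 - t := ⟨_, rfl⟩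
  have hsσ : σ s = s := by rw [hs]; simp [htσ]
  have hls : l = t * s := by
    have : (1 - l) ^ 2 * (l - t * s) = 0 := by
      rw [hs]
      have e : (1 - l) ^ 2 * (l - t * (1 - t)) = (1-l)^2 * l - (t * (1 - l)) * (1 - l)
        + (t * (1 - l)) ^ 2 := by ring
      rw [e, ht1]
      linear_combination l ^ 3 * hsh
    have := (mul_eq_zero.mp this).resolve_left (pow_ne_zero _ h1l)
    exact sub_eq_zero.mp this
  have ht0 : t ≠ 0 := by rintro rfl; simp at hls; exact hl0 hls
  have hNt : N * t * s ^ 4 = -1 := by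
    have h3 : t ^ 3 = - (N * l ^ 4) := by
      have e : t ^ 3 = t * (1 - l) - l := by rw [hls, hs]; ring
      rw [e, ht1]; ring
    have : t ^ 3 * (N * t * s ^ 4 + 1) = 0 := by
      have e : t ^ 3 * (N * t * s ^ 4 + 1) = N * (t * s) ^ 4 + t ^ 3 := by ring
      rw [e, ← hls, h3]; ring
    have := (mul_eq_zero.mp this).resolve_left (pow_ne_zero _ ht0)
    linear_combination this
  obtain ⟨u, hu⟩ : ∃ u, u = (x * σ y - σ x * y) / β := ⟨_, rfl⟩
  have hd0 : x * σ y - σ x * y = β * u := by rw [hu]; field_simp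
  have he0 : x * σ (σ y) - σ (σ x) * y = u + l * σ (σ (σ (σ β))) * σ β * σ u := by
    have hd1 : σ x * σ (σ y) - σ (σ x) * σ y = σ β * σ u := by
      have := congrArg σ hd0
      simpa only [map_mul, map_sub] using this
    apply mul_left_cancel₀ hβ
    rw [hα'] at hdet
    linear_combination hd0 + l * β * σ (σ (σ (σ β))) * hd1 - hdet
  have D1 := congrArg σ hd0
  have D2 := congrArg σ D1
  have D3 := congrArg σ D2
  have D4 := congrArg σ D3
  have E1 := congrArg σ he0
  have E2 := congrArg σ E1
  have E3 := congrArg σ E2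
  have E4 := congrArg σ E3
  simp only [map_mul, map_sub, map_add, h5, hl] at D1 D2 D3 D4 E1 E2 E3 E4
  suffices hu0 : u = 0 by rw [hd0, hu0, mul_zero]
  have hNt' : β * σ β * σ (σ β) * σ (σ (σ β)) * σ (σ (σ (σ β))) * t * s ^ 4 = -1 := by
    rw [← hNdef]; exact hNt
  have Q0 : (1 - l) * β * σ (σ β) * u * σ (σ u) - u * σ u - l * σ (σ (σ (σ β))) * σ β * σ u ^ 2
      - l ^ 2 * σ (σ (σ (σ β))) * σ β * β * σ (σ β) * σ u * σ (σ u) - σ β * σ u * σ (σ (σ u))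
      - l * σ β * σ (σ β) * σ (σ (σ (σ β))) * σ u * σ (σ (σ (σ u))) = 0 := by
    have := quad_aux _ _ _ _ _ _ β (σ β) (σ (σ β)) (σ (σ (σ β))) (σ (σ (σ (σ β))))
      u (σ u) (σ (σ u)) (σ (σ (σ u))) (σ (σ (σ (σ u)))) l (by ring) hd0 D1 D2 he0 E1 E3
    linear_combination this
  have Q1 := congrArg σ Q0
  simp only [map_mul, map_sub, map_add, map_pow, map_one, map_zero, h5, hl] at Q1
  have Q2 := congrArg σ Q1
  simp only [map_mul, map_sub, map_add, map_pow, map_one, map_zero, h5, hl] at Q2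
  have Q3 := congrArg σ Q2
  simp only [map_mul, map_sub, map_add, map_pow, map_one, map_zero, h5, hl] at Q3
  have Q4 := congrArg σ Q3
  simp only [map_mul, map_sub, map_add, map_pow, map_one, map_zero, h5, hl] at Q4
  have hsplit := split_aux _ _ _ _ _ _ _ _ _ _ l t s hs hls hNt' Q0 Q1 Q2 Q3 Q4
  clear Q0 Q1 Q2 Q3 Q4 D1 D2 D3 D4 E1 E2 E3 E4
  obtain ⟨z, hz⟩ : ∃ z, z = t * u - s ^ 2 * σ (σ (σ (σ β))) * σ β * σ u
    + s ^ 5 * σ (σ (σ (σ β))) * σ β * β * σ (σ β) * σ (σ u) - s ^ 2 * σ β * σ (σ (σ u))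
        - t * s ^ 3 * σ β * σ (σ β) * σ (σ (σ (σ β))) * σ (σ (σ (σ u))) := ⟨_, rfl⟩
  have Z1 := congrArg σ hz
  simp only [map_mul, map_sub, map_add, map_pow, h5, htσ, hsσ] at Z1
  have Z2 := congrArg σ Z1
  simp only [map_mul, map_sub, map_add, map_pow, h5, htσ, hsσ] at Z2
  have Z3 := congrArg σ Z2
  simp only [map_mul, map_sub, map_add, map_pow, h5, htσ, hsσ] at Z3
  have Z4 := congrArg σ Z3
  simp only [map_mul, map_sub, map_add, map_pow, h5, htσ, hsσ] at Z4
  rw [← hz, ← Z2] at hsplit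
  have hz0 : z = 0 := by
    rcases mul_eq_zero.mp hsplit with h | h
    · exact h
    · exact (map_eq_zero σ).mp ((map_eq_zero σ).mp h)
  subst hz0
  simp only [map_zero] at Z1 Z2 Z3 Z4
  exact inv_aux _ _ _ _ _ _ _ _ _ _ l t s hs hls hl1 hNt' hz.symm Z1.symm Z2.symm Z3.symm Z4.symm

/-- The `F`-linear map `T_{α,β} : K → K²`, `x ↦ (x − α x^{q²}, x^q − β x^{q²})`. -/
def Tmap (q : ℕ) {K : Type*} [Field K] (α β : K) (x : K) : K × K :=
  (x - α * x ^ q ^ 2, x ^ q - β * x ^ q ^ 2)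

/-- The linear set `L_{α,β}` is maximum scattered: `T_{α,β}` is injective and
`K`-linear dependence of `T_{α,β}(x)` and `T_{α,β}(y)` for nonzero `x, y` forces
`y/x ∈ F`. -/
def IsMaxScattered (q : ℕ) {K : Type*} [Field K] (F : Subfield K) (α β : K) : Prop :=
  Function.Injective (Tmap q α β) ∧
    ∀ x y : K, x ≠ 0 → y ≠ 0 →
      ¬ LinearIndependent K ![Tmap q α β x, Tmap q α β y] → y / x ∈ F

theorem stmt_12 (q : ℕ) (hq : ∃ p n : ℕ, Nat.Prime p ∧ 0 < n ∧ q = p ^ n)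
    (K : Type*) [Field K] (F : Subfield K)
    (hFcard : Nat.card F = q) (hKcard : Nat.card K = q ^ 5)
    (β : K) (hβ : β ≠ 0) (l : K) (hlF : l ∈ F) (hl0 : l ≠ 0) (hl1 : l ≠ 1)
    (α : K) (hα : α ^ q = l * β ^ (q + 1))
    (hsh : l ^ 5 * (β ^ (1 + q + q ^ 2 + q ^ 3 + q ^ 4)) ^ 2 +
        l * (1 - 3 * l) * β ^ (1 + q + q ^ 2 + q ^ 3 + q ^ 4) + 1 = 0) :
    IsMaxScattered q F α β := by
  obtain ⟨p, n, hp, hn, rfl⟩ := hq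
  haveI : Fact p.Prime := ⟨hp⟩
  have hq0 : p ^ n ≠ 0 := pow_ne_zero _ hp.ne_zero
  have hq1 : 1 < p ^ n := Nat.one_lt_pow hn.ne' hp.one_lt
  haveI : Finite K := Nat.finite_of_card_ne_zero (by rw [hKcard]; exact pow_ne_zero _ hq0)
  haveI : Fintype K := Fintype.ofFinite K
  haveI : Fintype F := Fintype.ofFinite F
  have hKc : Fintype.card K = (p ^ n) ^ 5 := by rw [← hKcard, Nat.card_eq_fintype_card]
  have hFc : Fintype.card F = p ^ n := by rw [← hFcard, Nat.card_eq_fintype_card]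
  haveI : CharP K p := by
    refine charP_of_card_eq_prime_pow (R := K) (p := p) (f := n * 5) ?_
    rw [hKc, pow_mul]
  obtain ⟨σ, hσ⟩ : ∃ σ : K →+* K, ∀ x, σ x = x ^ p ^ n := ⟨iterateFrobenius K p n, fun x => rfl⟩
  generalize p ^ n = q at *
  have h5 : ∀ x, σ (σ (σ (σ (σ x)))) = x := by
    intro x
    have := FiniteField.pow_card x
    rw [hKc] at this
    simp only [hσ, ← pow_mul]
    convert this using 2
    ring
  have hσ2 : ∀ x, x ^ q ^ 2 = σ (σ x) := by
    intro x; simp only [hσ, ← pow_mul]; congr 1; ring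
  have hl : σ l = l := by
    have := FiniteField.pow_card (⟨l, hlF⟩ : F)
    rw [hFc] at this
    rw [hσ]
    exact congrArg Subtype.val this
  have hfix : ∀ x, σ x = x → x ∈ F := by
    intro x hx
    classical
    have hf0 : (Polynomial.X ^ q - Polynomial.X : Polynomial K) ≠ 0 :=
      FiniteField.X_pow_card_sub_X_ne_zero K hq1
    have hdeg : (Polynomial.X ^ q - Polynomial.X : Polynomial K).natDegree = q :=
      FiniteField.X_pow_card_sub_X_natDegree_eq K hq1
    have hmem : ∀ z : K, σ z = z →
        z ∈ (Polynomial.X ^ q - Polynomial.X : Polynomial K).roots.toFinset := by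
      intro z hz
      rw [hσ] at hz
      rw [Multiset.mem_toFinset, Polynomial.mem_roots hf0]
      simp [Polynomial.IsRoot, hz]
    have hsub : Finset.image (Subtype.val : F → K) Finset.univ ⊆
        (Polynomial.X ^ q - Polynomial.X : Polynomial K).roots.toFinset := by
      intro z hz
      obtain ⟨w, -, rfl⟩ := Finset.mem_image.mp hz
      apply hmem
      have := FiniteField.pow_card w
      rw [hFc] at this
      rw [hσ]
      exact congrArg Subtype.val this
    have heq := Finset.eq_of_subset_of_card_le hsub (by
      rw [Finset.card_image_of_injective _ Subtype.val_injective, Finset.card_univ, hFc]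
      exact (Multiset.toFinset_card_le _).trans ((Polynomial.card_roots' _).trans hdeg.le))
    have hx' := hmem x hx
    rw [← heq] at hx'
    obtain ⟨w, -, rfl⟩ := Finset.mem_image.mp hx'
    exact w.2
  have hNorm : β ^ (1 + q + q ^ 2 + q ^ 3 + q ^ 4)
      = β * σ β * σ (σ β) * σ (σ (σ β)) * σ (σ (σ (σ β))) := by
    simp only [hσ, ← pow_mul, pow_add, pow_one]
    congr 2 <;> ring
  have hα' : σ α = l * (σ β * β) := by
    rw [hσ, hα, pow_succ, hσ]
  rw [hNorm] at hsh
  have h2 : ∀ x, x ≠ 0 → Tmap q α β x ≠ 0 := by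
    intro x hx h
    simp only [Tmap, Prod.mk_eq_zero, hσ2, ← hσ] at h
    obtain ⟨ha, hb⟩ := h
    have hx1 := congrArg σ ha
    simp only [map_sub, map_mul, map_zero] at hx1
    have hx2 := congrArg σ hb
    simp only [map_sub, map_mul, map_zero] at hx2
    rw [hα'] at hx1
    have hx3 : σ (σ (σ x)) ≠ 0 := by simpa using hx
    have hsb : σ β ≠ 0 := by simpa using hβ
    have : (1 - l) * (σ β * β * σ (σ (σ x))) = 0 := by
      linear_combination hx1 - hb - β * hx2
    rcases mul_eq_zero.mp this with h | h
    · exact hl1 (sub_eq_zero.mp h).symm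
    · exact mul_ne_zero (mul_ne_zero hsb hβ) hx3 h
  have hT : ∀ x y, Tmap q α β x - Tmap q α β y = Tmap q α β (x - y) := by
    intro x y
    simp only [Tmap, hσ2, ← hσ, map_sub, Prod.mk_sub_mk]
    congr 1 <;> ring
  refine ⟨?_, ?_⟩
  · intro x y hxy
    by_contra hne
    exact h2 (x - y) (sub_ne_zero.mpr hne) (by rw [← hT, hxy, sub_self])
  · intro x y hx hy hdep
    have hdet : (x - α * σ (σ x)) * (σ y - β * σ (σ y))
        - (σ x - β * σ (σ x)) * (y - α * σ (σ y)) = 0 := by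
      rw [LinearIndependent.pair_iff] at hdep
      push Not at hdep
      obtain ⟨a, b, hab, hne⟩ := hdep
      simp only [Tmap, hσ2, ← hσ, Prod.smul_mk, Prod.mk_add_mk, smul_eq_mul,
        Prod.mk_eq_zero] at hab
      obtain ⟨h1, h3⟩ := hab
      by_cases ha : a = 0
      · have hb := hne ha
        apply (mul_eq_zero.mp _).resolve_left hb
        linear_combination (x - α * σ (σ x)) * h3 - (σ x - β * σ (σ x)) * h1
      · apply (mul_eq_zero.mp _).resolve_left ha
        linear_combination (σ y - β * σ (σ y)) * h1 - (y - α * σ (σ y)) * h3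
    have hd := core_aux σ h5 β l α hβ hl hl0 hl1 hα' hsh x y hdet
    apply hfix
    have hsx : σ x ≠ 0 := by simpa using hx
    rw [map_div₀]
    field_simp
    linear_combination hd
end

section
/- Let α, β ∈ K with αβ ≠ 0 and α^q ≠ β^{q+1}, and suppose L_{α,β} is maximum scattered. Then α^q/β^{q+1} ∈ F, i.e. (α^q/β^{q+1})^q = α^q/β^{q+1}. -/
section Aux

open Polynomial

/-- Three distinct roots kill a quadratic. -/
lemma quad_three {Ω : Type*} [Field Ω] (A B C x y z : Ω) (hxy : x ≠ y) (hxz : x ≠ z) (hyz : y ≠ z)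
    (hx : A * x ^ 2 + B * x + C = 0) (hy : A * y ^ 2 + B * y + C = 0)
    (hz : A * z ^ 2 + B * z + C = 0) : A = 0 ∧ B = 0 ∧ C = 0 := by
  have h1 : A * (x + y) + B = 0 := by
    apply mul_left_cancel₀ (sub_ne_zero.2 hxy); linear_combination hx - hy
  have h2 : A * (x + z) + B = 0 := by
    apply mul_left_cancel₀ (sub_ne_zero.2 hxz); linear_combination hx - hz
  have hA : A = 0 := by
    apply mul_left_cancel₀ (sub_ne_zero.2 hyz); linear_combination h1 - h2
  have hB : B = 0 := by rw [hA] at h1; linear_combination h1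
  refine ⟨hA, hB, ?_⟩
  rw [hA, hB] at hx; linear_combination hx

/-- Elements of the kernel of the twist: at most two points in each fibre. -/
lemma fibre_le_two {Ω : Type*} [Field Ω] (q : ℕ) (hinj : Function.Injective fun x : Ω => x ^ q)
    (c0 c1 c2 c3 c4 c κ : Ω) (h0 : c0 ≠ 0) (h1 : c1 ≠ 0) (h4 : c4 ≠ 0)
    (hb : c3 ^ q = c4) (hb' : c4 ^ q = c0)
    (hd1 : c0 ≠ c1) (hd2 : c0 * c3 ≠ c1 * c4) (hd3 : c0 * c2 ≠ c1 * c3)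
    (hd4 : c1 * c4 ≠ c0 * c2) (h3 : c3 ≠ 0) (h2 : c2 ≠ 0)
    (S : Finset Ω)
    (hS : ∀ t ∈ S, c0 * t ^ 2 * t ^ q + c1 * t * (t ^ q) ^ 2 - c2 * (t ^ q) ^ 2 - c4 * t ^ 2
      - c * t * t ^ q + (c2 + c3) * t ^ q + (c3 + c4) * t - c3 = 0)
    (hκ : ∀ t ∈ S, t * t ^ q - c2 / c1 * t ^ q - c4 / c0 * t = κ) : S.card ≤ 2 := by
  by_contra hcon
  rw [not_le, Finset.two_lt_card] at hcon
  obtain ⟨x, hx, y, hy, z, hz, hxy, hxz, hyz⟩ := hcon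
  have hq : ∀ {s t : Ω}, s ^ q = t ^ q → s = t := fun h => hinj h
  set a := c2 / c1 with ha
  set b := c4 / c0 with hbd
  have ha' : c1 * a = c2 := by rw [ha]; field_simp
  have hb2 : c0 * b = c4 := by rw [hbd]; field_simp
  by_cases hκab : κ = - (a * b)
  · have key : ∀ t ∈ S, t = a ∨ t = c3 / c4 := by
      intro t ht
      have h := hκ t ht
      have : (t - a) * (t ^ q - b) = 0 := by rw [hκab] at h; linear_combination h
      rcases mul_eq_zero.1 this with h | h
      · left; linear_combination h
      · right; apply hq; rw [div_pow, hb, hb']; linear_combination h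
    rcases key x hx with h | h <;> rcases key y hy with h' | h' <;> rcases key z hz with h'' | h'' <;>
      first
        | exact hxy (h.trans h'.symm)
        | exact hxz (h.trans h''.symm)
        | exact hyz (h'.trans h''.symm)
  -- the line
  set k := c - c0 * a - c1 * b with hk
  set lx := κ * c0 - k * b + c3 + c4 with hlx
  set ly := κ * c1 - k * a + c2 + c3 with hly
  set l0 := - κ * k - c3 with hl0
  have line : ∀ t ∈ S, lx * t + ly * t ^ q + l0 = 0 := by
    intro t ht
    have h := hκ t ht
    have h' := hS t ht
    rw [hlx, hly, hl0, hk]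
    rw [← ha', ← hb2] at h'
    rw [← ha', ← hb2]
    linear_combination h' - (c0 * t + c1 * t ^ q - k) * h
  have hyl : ly = 0 ∧ lx = 0 ∧ l0 = 0 := by
    by_cases hly0 : ly = 0
    · have e1 := line x hx
      have e2 := line y hy
      rw [hly0] at e1 e2
      have : lx = 0 := by
        apply mul_left_cancel₀ (sub_ne_zero.2 hxy); linear_combination e1 - e2
      refine ⟨hly0, this, ?_⟩
      rw [this] at e1; linear_combination e1
    · exfalso
      have quad : ∀ t ∈ S, lx * t ^ 2 + (l0 - lx * a + b * ly) * t + (κ * ly - a * l0) = 0 := by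
        intro t ht
        have h := hκ t ht
        have h' := line t ht
        linear_combination (t - a) * h' - ly * h
      obtain ⟨e1, e2, e3⟩ := quad_three _ _ _ x y z hxy hxz hyz (quad x hx) (quad y hy) (quad z hz)
      apply hκab
      apply mul_left_cancel₀ hly0
      rw [e1] at e2
      linear_combination e3 + a * e2
  obtain ⟨e1, e2, e3⟩ := hyl
  have kk : κ * k = - c3 := by rw [hl0] at e3; linear_combination -e3
  have f1 : (k - c0) * (c4 + κ * c0) = 0 := by
    rw [hlx] at e2; rw [← hb2] at e2 ⊢; linear_combination -c0 * e2 + c0 * kk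
  have f2 : (k - c1) * (c2 + κ * c1) = 0 := by
    rw [hly] at e1; rw [← ha'] at e1 ⊢; linear_combination -c1 * e1 + c1 * kk
  rcases mul_eq_zero.1 f1 with g1 | g1 <;> rcases mul_eq_zero.1 f2 with g2 | g2
  · exact hd1 (by linear_combination g2 - g1)
  · exact hd3 (by linear_combination -c1 * kk +c0 * g2 + κ * c1 * g1)
  · exact hd2 (by linear_combination c0 * kk - c1 * g1 - κ * c0 * g2)
  · have : c3 * (c1 * c4 - c0 * c2) = 0 := by
      linear_combination c3 * c1 * g1 - c3 * c0 * g2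
    rcases mul_eq_zero.1 this with h | h
    · exact h3 h
    · exact hd4 (by linear_combination h)

/-- Key lemma: existence of a point on the pentagonal curve. -/
lemma exists_point {Ω : Type*} [Field Ω] [IsAlgClosed Ω] (q : ℕ) (hq1 : 1 < q)
    (hq0 : (q : Ω) = 0) (fr : Ω →+* Ω) (hfr : ∀ x, fr x = x ^ q)
    (c0 c1 c2 c3 c4 c : Ω) (e0 : fr c0 = c1) (e1 : fr c1 = c2) (e2 : fr c2 = c3)
    (e3 : fr c3 = c4) (e4 : fr c4 = c0) (ec : fr c = c) (hne : c0 ≠ c1) :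
    ∃ t : Ω, t * fr (fr t) = 1 - fr t ∧
      c0 * t + c1 * fr t + c2 * fr (fr t) + c3 * fr (fr (fr t)) + c4 * fr (fr (fr (fr t))) = c := by
  classical
  have inj := fr.injective
  have hne1 : c1 ≠ c2 := by rw [← e0, ← e1]; exact fun h => hne (inj (by rw [e0]; rw [e0] at h; exact h))
  have hne2 : c2 ≠ c3 := fun h => hne1 (inj (by rw [e1, e2]; exact h))
  have hne3 : c3 ≠ c4 := fun h => hne2 (inj (by rw [e2, e3]; exact h))
  have hne4 : c4 ≠ c0 := fun h => hne3 (inj (by rw [e3, e4]; exact h))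
  have h0 : c0 ≠ 0 := by
    intro h; apply hne; rw [← e0, h, map_zero]
  have h1 : c1 ≠ 0 := by rw [← e0]; exact (map_ne_zero fr).2 h0
  have h2 : c2 ≠ 0 := by rw [← e1]; exact (map_ne_zero fr).2 h1
  have h3 : c3 ≠ 0 := by rw [← e2]; exact (map_ne_zero fr).2 h2
  have h4 : c4 ≠ 0 := by rw [← e3]; exact (map_ne_zero fr).2 h3
  have P0 : c0 * c2 ≠ c1 * c3 := by
    intro h
    have h' := congrArg fr h
    simp only [map_mul, e0, e1, e2, e3, e4] at h'
    have h'' := congrArg fr h'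
    simp only [map_mul, e0, e1, e2, e3, e4] at h''
    exact hne2 (mul_left_cancel₀ h0 (by linear_combination h + h' + h''))
  have P4 : c4 * c1 ≠ c0 * c2 := by
    intro h
    have h' := congrArg fr h
    simp only [map_mul, e0, e1, e2, e3, e4] at h'
    exact P0 h'
  have P3 : c3 * c0 ≠ c4 * c1 := by
    intro h
    have h' := congrArg fr h
    simp only [map_mul, e0, e1, e2, e3, e4] at h'
    exact P4 h'
  have P2 : c2 * c4 ≠ c3 * c0 := by
    intro h
    have h' := congrArg fr h
    simp only [map_mul, e0, e1, e2, e3, e4] at h'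
    exact P3 h'
  by_contra hno
  push Not at hno
  let f : Polynomial Ω := C c1 * X ^ (2 * q + 1) + (C c0 * X ^ (q + 2) - C c2 * X ^ (2 * q) - C c4 * X ^ 2
      - C c * X ^ (q + 1) + C (c2 + c3) * X ^ q + C (c3 + c4) * X - C c3)
  have feval : ∀ t, f.eval t = c0 * t ^ 2 * t ^ q + c1 * t * (t ^ q) ^ 2 - c2 * (t ^ q) ^ 2
      - c4 * t ^ 2 - c * t * t ^ q + (c2 + c3) * t ^ q + (c3 + c4) * t - c3 := by
    intro t
    simp only [f, eval_add, eval_sub, eval_mul, eval_C, eval_pow, eval_X]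
    ring
  have fder : ∀ t, t ≠ 0 → f.derivative.eval t = 2 * (c0 * t ^ q - c4) * t +
      (c1 * (t ^ q) ^ 2 - c * t ^ q + c3 + c4) := by
    intro t ht
    obtain ⟨r, rfl⟩ : ∃ r, q = r + 1 := ⟨q - 1, by omega⟩
    have hr : (r : Ω) = -1 := by push_cast at hq0; linear_combination hq0
    simp only [f, derivative_add, derivative_sub, derivative_C_mul, derivative_X_pow, derivative_C,
      derivative_X, eval_add, eval_sub, eval_mul, eval_C, eval_pow, eval_X, map_natCast,
      eval_natCast, eval_one, eval_zero, Nat.add_sub_cancel,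
      show 2 * (r + 1) - 1 = 2 * r + 1 by omega, show r + 1 + 2 - 1 = r + 2 by omega]
    push_cast
    rw [hr]
    ring
  have fdeg : f.natDegree = 2 * q + 1 := by
    apply natDegree_eq_of_le_of_coeff_ne_zero
    · apply natDegree_add_le_of_degree_le
      · compute_degree
      · compute_degree
        all_goals omega
    · simp only [f, coeff_add, coeff_sub, coeff_C_mul, coeff_X_pow, coeff_C, coeff_X]
      rw [if_pos trivial, if_neg (by omega), if_neg (by omega), if_neg (by omega), if_neg (by omega),
        if_neg (by omega), if_neg (by omega), if_neg (by omega)]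
      simpa using h1
  have fne : f ≠ 0 := by
    intro h; rw [h] at fdeg; simp at fdeg
  -- analysis of a root
  have root : ∀ t, f.eval t = 0 → t ≠ 0 ∧
      t * (c0 * t ^ q - c4) = fr (fr t) * (c2 * t ^ q - c3) ∧ t * fr (fr t) ≠ 1 - fr t := by
    intro t ht
    rw [feval] at ht
    have ht0 : t ≠ 0 := by
      rintro rfl
      have hz : (0 : Ω) ^ q = 0 := zero_pow (by omega)
      rw [hz] at ht
      apply h3; linear_combination -ht
    have hx := ht
    rw [← hfr] at ht ⊢
    have ht2 := congrArg fr ht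
    simp only [map_add, map_sub, map_mul, map_pow, map_zero, e0, e1, e2, e3, e4, ec] at ht2
    have hy0 : fr t ≠ 0 := (map_ne_zero fr).2 ht0
    have hz0 : fr (fr t) ≠ 0 := (map_ne_zero fr).2 hy0
    have hrat : t * fr (fr t) ≠ 1 - fr t := by
      intro h
      apply hno t h
      have h' := congrArg fr h
      simp only [map_sub, map_mul, map_one] at h'
      have h'' := congrArg fr h'
      simp only [map_sub, map_mul, map_one] at h''
      generalize fr (fr (fr (fr t))) = u4 at *
      generalize fr (fr (fr t)) = u3 at *
      generalize fr (fr t) = u2 at *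
      generalize fr t = u1 at *
      have k3 : t * u1 * u3 = t + u1 - 1 := by linear_combination t * h' - h
      have k4 : u1 * u4 = 1 - t := by
        apply mul_left_cancel₀ hz0
        linear_combination u1 * h'' - h' + h
      apply mul_left_cancel₀ (mul_ne_zero ht0 hy0)
      linear_combination ht + c2 * u1 * h + c3 * k3 + c4 * t * k4
    refine ⟨ht0, ?_, hrat⟩
    have : (t * fr (fr t) - (1 - fr t)) *
        (t * (c0 * fr t - c4) - fr (fr t) * (c2 * fr t - c3)) = 0 := by
      linear_combination fr (fr t) * ht - t * ht2
    rcases mul_eq_zero.1 this with h | h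
    · exact absurd (sub_eq_zero.1 h) hrat
    · exact sub_eq_zero.1 h
  have nodup : f.roots.Nodup := by
    rw [Multiset.nodup_iff_count_le_one]
    intro t
    rw [count_roots]
    by_contra hlt
    rw [not_le, one_lt_rootMultiplicity_iff_isRoot fne] at hlt
    obtain ⟨r1, r2⟩ := hlt
    obtain ⟨ht0, hr, hrat⟩ := root t r1
    have r1' : f.eval t = 0 := r1
    have r2' : f.derivative.eval t = 0 := r2
    rw [feval] at r1'
    rw [fder t ht0] at r2'
    rw [← hfr] at r1' r2' hr
    have hz0 : fr (fr t) ≠ 0 := (map_ne_zero fr).2 ((map_ne_zero fr).2 ht0)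
    have : t * (c0 * fr t - c4) * (t * fr (fr t) - (1 - fr t)) = 0 := by
      linear_combination -fr (fr t) * r1' + fr (fr t) * t * r2' - (1 - fr t) * hr
    rcases mul_eq_zero.1 this with h | h
    · rcases mul_eq_zero.1 h with h' | h'
      · exact ht0 h'
      · rw [h', mul_zero] at hr
        rcases mul_eq_zero.1 hr.symm with h'' | h''
        · exact hz0 h''
        · exact P2 (by linear_combination c0 * h'' - c2 * h')
    · exact hrat (sub_eq_zero.1 h)
  have hcard : f.roots.toFinset.card = 2 * q + 1 := by
    rw [Multiset.toFinset_card_of_nodup nodup, ← fdeg]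
    exact splits_iff_card_roots.1 (IsAlgClosed.splits f)
  let h : Ω → Ω := fun t => t * t ^ q - c2 / c1 * t ^ q - c4 / c0 * t
  have hh : ∀ t, f.eval t = 0 → c0 * h t = c2 * (h t) ^ q := by
    intro t ht
    obtain ⟨-, hr, -⟩ := root t ht
    simp only [h]
    rw [← hfr (_ - _)]
    rw [← hfr] at hr ⊢
    simp only [map_sub, map_mul, map_div₀, e0, e1, e2, e3, e4]
    field_simp
    linear_combination c1 * hr
  let g : Polynomial Ω := C c2 * X ^ q + (- (C c0 * X))
  have gdeg : g.natDegree ≤ q := by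
    apply natDegree_add_le_of_degree_le
    · compute_degree
    · compute_degree
      all_goals omega
  have gne : g ≠ 0 := by
    intro hg
    have : g.coeff 1 = 0 := by rw [hg]; simp
    simp [g, coeff_X_pow, show 1 ≠ q by omega, h0] at this
  have himg : (f.roots.toFinset.image h) ⊆ g.roots.toFinset := by
    intro k hk
    rw [Finset.mem_image] at hk
    obtain ⟨t, ht, rfl⟩ := hk
    rw [Multiset.mem_toFinset, mem_roots fne] at ht
    rw [Multiset.mem_toFinset, mem_roots gne]
    have := hh t ht
    simp only [g, IsRoot, eval_add, eval_neg, eval_mul, eval_C, eval_pow, eval_X]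
    linear_combination -this
  have himg' : (f.roots.toFinset.image h).card ≤ q :=
    (Finset.card_le_card himg).trans ((Multiset.toFinset_card_le _).trans ((card_roots' g).trans gdeg))
  have hfib := Finset.card_le_mul_card_image (f := h) f.roots.toFinset 2 (by
    intro κ _
    apply fibre_le_two q (fun a b hab => inj (by simpa [hfr] using hab)) c0 c1 c2 c3 c4 c κ h0 h1 h4
      (by rw [← hfr, e3]) (by rw [← hfr, e4]) hne (by rw [mul_comm c0, mul_comm c1]; exact P3) P0
      (by rw [mul_comm c1]; exact P4) h3 h2
    · intro t ht
      rw [Finset.mem_filter, Multiset.mem_toFinset, mem_roots fne] at ht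
      rw [← feval]; exact ht.1
    · intro t ht
      exact (Finset.mem_filter.1 ht).2)
  rw [hcard] at hfib
  omega

lemma exists_root_tri {Ω : Type*} [Field Ω] [IsAlgClosed Ω] (n : ℕ) (hn : 1 < n) (b : Ω) :
    ∃ x : Ω, x ^ n - x + b = 0 := by
  have hd : (X ^ n + (-X + C b) : Polynomial Ω).natDegree = n := by
    rw [natDegree_add_eq_left_of_natDegree_lt]
    · simp
    · rw [natDegree_X_pow]
      refine lt_of_le_of_lt ?_ hn
      compute_degree
  obtain ⟨x, hx⟩ := IsAlgClosed.exists_root (X ^ n + (-X + C b) : Polynomial Ω) (by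
    intro h
    have h2 : (X ^ n + (-X + C b) : Polynomial Ω).natDegree = 0 :=
      natDegree_eq_of_degree_eq_some h
    omega)
  refine ⟨x, ?_⟩
  simp only [IsRoot, eval_add, eval_pow, eval_X, eval_neg, eval_C] at hx
  linear_combination hx

/-- From a point on the pentagonal curve, produce `m` and `z`. -/
lemma chain {Ω : Type*} [Field Ω] [IsAlgClosed Ω] (q : ℕ) (hq1 : 1 < q)
    (fr : Ω →+* Ω) (hfr : ∀ x, fr x = x ^ q)
    (t : Ω) (ht : t * fr (fr t) = 1 - fr t) :
    t ≠ 0 ∧ fr (fr (fr (fr (fr t)))) = t ∧ ∃ m z : Ω, fr (fr (fr (fr (fr m)))) = m ∧ m ≠ 0 ∧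
      m * (1 - fr m) = 1 - t ∧
      m * fr m * fr (fr m) * fr (fr (fr m)) * fr (fr (fr (fr m))) =
        - (t * fr t * fr (fr t) * fr (fr (fr t)) * fr (fr (fr (fr t)))) ∧
      fr (fr (fr (fr (fr z)))) = z ∧ fr z ≠ z ∧ m * (fr (fr z) - z) = fr z - z := by
  obtain ⟨t1, E0⟩ : ∃ y, fr t = y := ⟨_, rfl⟩
  obtain ⟨t2, E1⟩ : ∃ y, fr t1 = y := ⟨_, rfl⟩
  obtain ⟨t3, E2⟩ : ∃ y, fr t2 = y := ⟨_, rfl⟩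
  obtain ⟨t4, E3⟩ : ∃ y, fr t3 = y := ⟨_, rfl⟩
  obtain ⟨t5, E4⟩ : ∃ y, fr t4 = y := ⟨_, rfl⟩
  have ht0 : t ≠ 0 := by
    rintro rfl
    simp at ht
  have ht1 : t1 ≠ 0 := by rw [← E0]; exact (map_ne_zero fr).2 ht0
  have ht2 : t2 ≠ 0 := by rw [← E1]; exact (map_ne_zero fr).2 ht1
  have ht3 : t3 ≠ 0 := by rw [← E2]; exact (map_ne_zero fr).2 ht2
  have ht4 : t4 ≠ 0 := by rw [← E3]; exact (map_ne_zero fr).2 ht3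
  rw [E0, E1] at ht
  have g2 := congrArg fr ht
  simp only [map_sub, map_mul, map_one, E0, E1, E2, E3, E4] at g2
  have g3 := congrArg fr g2
  simp only [map_sub, map_mul, map_one, E0, E1, E2, E3, E4] at g3
  have g4 := congrArg fr g3
  simp only [map_sub, map_mul, map_one, E0, E1, E2, E3, E4] at g4
  have g0 : t1 * t4 = 1 - t := by
    apply mul_left_cancel₀ ht2
    linear_combination t1 * g3 - g2 + ht
  have e5 : t5 = t := by
    have : t3 * t5 = t * t3 := by
      have k : t2 * (t * t3 - (1 - t4)) = 0 := by
        linear_combination t3 * ht - g2 + g3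
      rcases mul_eq_zero.1 k with h | h
      · exact absurd h ht2
      · linear_combination g4 - h
    apply mul_left_cancel₀ ht3
    linear_combination this
  rw [e5] at g4 E4
  clear e5 t5
  have g1 := ht
  clear ht
  refine ⟨ht0, by rw [E0, E1, E2, E3, E4], ?_⟩
  obtain ⟨m, hm⟩ := exists_root_tri (q + 1) (by omega) (1 - t)
  obtain ⟨m1, M0⟩ : ∃ y, fr m = y := ⟨_, rfl⟩
  obtain ⟨m2, M1⟩ : ∃ y, fr m1 = y := ⟨_, rfl⟩
  obtain ⟨m3, M2⟩ : ∃ y, fr m2 = y := ⟨_, rfl⟩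
  obtain ⟨m4, M3⟩ : ∃ y, fr m3 = y := ⟨_, rfl⟩
  obtain ⟨m5, M4⟩ : ∃ y, fr m4 = y := ⟨_, rfl⟩
  have n0 : m * (1 - m1) = 1 - t := by
    rw [← M0, hfr]; rw [pow_succ] at hm; linear_combination -hm
  have hm0 : m ≠ 0 := by
    rintro rfl
    apply mul_ne_zero ht1 ht4
    rw [g0, ← n0]; ring
  have hm1' : m ≠ 1 := by
    rintro rfl
    rw [map_one] at M0
    apply mul_ne_zero ht1 ht4
    rw [g0, ← n0, ← M0]; ring
  have hm1 : m1 ≠ 0 := by rw [← M0]; exact (map_ne_zero fr).2 hm0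
  have hm2 : m2 ≠ 0 := by rw [← M1]; exact (map_ne_zero fr).2 hm1
  have hm3 : m3 ≠ 0 := by rw [← M2]; exact (map_ne_zero fr).2 hm2
  have hm4 : m4 ≠ 0 := by rw [← M3]; exact (map_ne_zero fr).2 hm3
  have n1 := congrArg fr n0
  simp only [map_sub, map_mul, map_one, M0, M1, E0] at n1
  have n2 := congrArg fr n1
  simp only [map_sub, map_mul, map_one, M1, M2, E1] at n2
  have n3 := congrArg fr n2
  simp only [map_sub, map_mul, map_one, M2, M3, E2] at n3
  have n4 := congrArg fr n3
  simp only [map_sub, map_mul, map_one, M3, M4, E3] at n4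
  have p1 : m * m1 = m - (1 - t) := by linear_combination -n0
  have p2 : m * m1 * m2 = t1 * (m - t4) := by
    linear_combination -m * n1 + p1 + g0
  have k : t1 * t2 * t4 = t1 + t2 - 1 := by
    linear_combination t2 * g0 - g1
  have p3 : m * m1 * m2 * m3 = t1 * t2 * t4 * (m - 1) := by
    linear_combination -m * m1 * n2 + p2 - (1 - t2) * p1 - m * k + k - g0 + g1
  have p4 : m * m1 * m2 * m3 * m4 = - (t * t1 * t2 * t3 * t4) := by
    linear_combination -m * m1 * m2 * n3 + p3 - (1 - t3) * p2 + (t1 * m - t1 * t4 ) * g3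
      + t1 * t2 * t4 * g4
  have e5 : m5 = m := by
    have : - (t * t1 * t2 * t3 * t4) * m5 = - (t * t1 * t2 * t3 * t4) * m := by
      linear_combination -m5 * p4 - m * m1 * m2 * m3 * n4 + p4 - (1 - t4) * p3
        + t1 * t2 * t4 * (m - 1) * g4
    refine mul_left_cancel₀ (neg_ne_zero.2 ?_) this
    exact mul_ne_zero (mul_ne_zero (mul_ne_zero (mul_ne_zero ht0 ht1) ht2) ht3) ht4
  rw [e5] at M4 n4
  clear e5 m5
  have hA : m - (1 - t) ≠ 0 := by rw [← p1]; exact mul_ne_zero hm0 hm1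
  have hB : m - t4 ≠ 0 := by
    intro h; rw [h, mul_zero] at p2; exact mul_ne_zero (mul_ne_zero hm0 hm1) hm2 p2
  obtain ⟨r, hr⟩ : ∃ r, r = (1 - m) / m := ⟨_, rfl⟩
  obtain ⟨r1, R0⟩ : ∃ y, fr r = y := ⟨_, rfl⟩
  obtain ⟨r2, R1⟩ : ∃ y, fr r1 = y := ⟨_, rfl⟩
  obtain ⟨r3, R2⟩ : ∃ y, fr r2 = y := ⟨_, rfl⟩
  obtain ⟨r4, R3⟩ : ∃ y, fr r3 = y := ⟨_, rfl⟩
  have hrm : r * m = 1 - m := by rw [hr]; field_simp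
  have hr1 := congrArg fr hrm
  simp only [map_sub, map_mul, map_one, M0, R0] at hr1
  have hr2 := congrArg fr hr1
  simp only [map_sub, map_mul, map_one, M1, R1] at hr2
  have hr3 := congrArg fr hr2
  simp only [map_sub, map_mul, map_one, M2, R2] at hr3
  have f1 : r1 * (m - (1 - t)) = t1 * t4 := by
    linear_combination -r1 * p1 + m * hr1 + n0 - g0
  have f2 : t1 * (r2 * (m - t4)) = t * t2 * m := by
    linear_combination -r2 * p2 + m * m1 * hr2 + m * n1 - m * g1
  have f3 : (1 - m) * (r3 * t2 * t4) = - ((m - (1 - t)) * t3) := by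
    apply mul_left_cancel₀ ht1
    linear_combination r3 * p3 - m * m1 * m2 * hr3 - m * m1 * n2 - (1 - t2) * p1
      + (m - (1 - t)) * g2
  have f4 : r1 * r2 * (m - (1 - t)) * (m - t4) = t4 * t * t2 * m := by
    apply mul_left_cancel₀ ht1
    linear_combination t1 * r2 * (m - t4) * f1 + t1 * t4 * f2
  have hs : 1 + r + r * r1 + r * r1 * r2 + r * r1 * r2 * r3 = 0 := by
    apply mul_left_cancel₀ (mul_ne_zero (mul_ne_zero hm0 hA) hB)
    linear_combination (m - (1 - t)) * (m - t4) * hrm + r * m * (m - t4) * f1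
      + t1 * t4 * (m - t4) * hrm + r * m * (1 + r3) * f4 + t4 * t * t2 * m * (1 + r3) * hrm
      + t * m * f3 + (1 - m) * (m - t4) * g0 + (1 - m) * t4 * m * g1 - m * (m - (1 - t)) * g4
      + m * (m - 1) * g0
  have hs' := congrArg fr hs
  simp only [map_add, map_mul, map_one, map_zero, R0, R1, R2, R3] at hs'
  have hN : r * r1 * r2 * r3 * r4 = 1 := by linear_combination r * hs' - hs
  have hr0 : r ≠ 0 := by
    rintro rfl
    simp at hN
  obtain ⟨w, hw⟩ := IsAlgClosed.exists_pow_nat_eq r (show 0 < q - 1 by omega)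
  have hw0 : w ≠ 0 := by
    rintro rfl
    rw [zero_pow (by omega)] at hw
    exact hr0 hw.symm
  have hw1 : fr w = r * w := by
    rw [hfr, ← hw, ← pow_succ, Nat.sub_add_cancel (by omega)]
  obtain ⟨z, hz⟩ := exists_root_tri q hq1 (-w)
  have hz1 : fr z = z + w := by rw [hfr]; linear_combination hz
  refine ⟨m, z, by rw [M0, M1, M2, M3, M4], hm0, by rw [M0]; exact n0, ?_, ?_, ?_, ?_⟩
  · rw [M0, M1, M2, M3, E0, E1, E2, E3]; exact p4
  · simp only [hz1, map_add, hw1, map_mul, R0, R1, R2, R3]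
    linear_combination w * hs
  · rw [hz1]; intro h; apply hw0; linear_combination h
  · simp only [hz1, map_add, hw1]
    linear_combination w * hrm

lemma pull_back {K Ω : Type*} [Field K] [Field Ω] [Finite K] (ι : K →+* Ω) (x : Ω)
    (hx : x ^ Nat.card K = x) : ∃ y, ι y = x := by
  classical
  have := Fintype.ofFinite K
  by_contra hno
  push Not at hno
  rw [Nat.card_eq_fintype_card] at hx
  have hne := FiniteField.X_pow_card_sub_X_ne_zero Ω (Fintype.one_lt_card (α := K))
  have hdeg := FiniteField.X_pow_card_sub_X_natDegree_eq Ω (Fintype.one_lt_card (α := K))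
  have hsub : (insert x (Finset.univ.image ι)).val ⊆
      (X ^ Fintype.card K - X : Polynomial Ω).roots := by
    intro y hy
    rw [mem_roots hne]
    simp only [IsRoot, eval_sub, eval_pow, eval_X, sub_eq_zero]
    rw [Finset.mem_val, Finset.mem_insert, Finset.mem_image] at hy
    rcases hy with rfl | ⟨k, -, rfl⟩
    · exact hx
    · rw [← map_pow, FiniteField.pow_card]
  have h := card_le_degree_of_subset_roots hsub
  rw [hdeg, Finset.card_insert_of_notMem (by
    intro h; obtain ⟨k, -, hk⟩ := Finset.mem_image.1 h; exact hno k hk),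
    Finset.card_image_of_injective _ ι.injective, Finset.card_univ] at h
  omega

lemma exists_lambda {K : Type*} [Field K] [Finite K] (q : ℕ) (hq1 : 1 < q)
    (hK : Nat.card K = q ^ 5) (A0 A1 A2 A3 A4 : K)
    (h : ∀ x : K, A0 * x + A1 * x ^ q + A2 * x ^ q ^ 2 + A3 * x ^ q ^ 3 + A4 * x ^ q ^ 4 = 0) :
    A0 = 0 ∧ A1 = 0 ∧ A2 = 0 ∧ A3 = 0 ∧ A4 = 0 := by
  have := Fintype.ofFinite K
  rw [Nat.card_eq_fintype_card] at hK
  have l1 : q < q ^ 2 := by simpa using Nat.pow_lt_pow_right hq1 (show 1 < 2 by norm_num)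
  have l2 : q ^ 2 < q ^ 3 := Nat.pow_lt_pow_right hq1 (by norm_num)
  have l3 : q ^ 3 < q ^ 4 := Nat.pow_lt_pow_right hq1 (by norm_num)
  have l4 : q ^ 4 < q ^ 5 := Nat.pow_lt_pow_right hq1 (by norm_num)
  generalize q ^ 2 = q2 at *
  generalize q ^ 3 = q3 at *
  generalize q ^ 4 = q4 at *
  have hP : (C A0 * X + C A1 * X ^ q + C A2 * X ^ q2 + C A3 * X ^ q3 + C A4 * X ^ q4 :
      Polynomial K) = 0 := by
    apply eq_zero_of_natDegree_lt_card_of_eval_eq_zero _ (f := (id : K → K)) Function.injective_id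
    · intro x
      simpa using h x
    · rw [hK]
      refine lt_of_le_of_lt ?_ l4
      compute_degree
      exact max_le (by omega) (max_le (by omega) (max_le (by omega) (max_le (by omega) le_rfl)))
  have co : ∀ n, (C A0 * X + C A1 * X ^ q + C A2 * X ^ q2 + C A3 * X ^ q3 + C A4 * X ^ q4 :
      Polynomial K).coeff n = 0 := by
    intro n; rw [hP, coeff_zero]
  simp only [coeff_add, coeff_C_mul, coeff_X_pow, coeff_X] at co
  refine ⟨?_, ?_, ?_, ?_, ?_⟩
  · have := co 1
    rwa [if_pos rfl, if_neg (by omega), if_neg (by omega), if_neg (by omega), if_neg (by omega),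
      mul_one, mul_zero, mul_zero, mul_zero, mul_zero, add_zero, add_zero, add_zero, add_zero] at this
  · have := co q
    rwa [if_neg (by omega), if_pos rfl, if_neg (by omega), if_neg (by omega), if_neg (by omega),
      mul_one, mul_zero, mul_zero, mul_zero, mul_zero, add_zero, add_zero, add_zero, zero_add] at this
  · have := co q2
    rwa [if_neg (by omega), if_neg (by omega), if_pos rfl, if_neg (by omega), if_neg (by omega),
      mul_one, mul_zero, mul_zero, mul_zero, mul_zero, add_zero, add_zero, add_zero, zero_add] at this
  · have := co q3
    rwa [if_neg (by omega), if_neg (by omega), if_neg (by omega), if_pos rfl, if_neg (by omega),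
      mul_one, mul_zero, mul_zero, mul_zero, mul_zero, add_zero, add_zero, add_zero, zero_add] at this
  · have := co q4
    rwa [if_neg (by omega), if_neg (by omega), if_neg (by omega), if_neg (by omega), if_pos rfl,
      mul_one, mul_zero, mul_zero, mul_zero, mul_zero, add_zero, add_zero, add_zero, zero_add] at this

lemma two_ker {K : Type*} [Field K] (a b c d : K) (h : a * d - b * c = 0) :
    ∃ x y : K, ¬ (x = 0 ∧ y = 0) ∧ a * x + b * y = 0 ∧ c * x + d * y = 0 := by
  by_cases h1 : b = 0 ∧ a = 0
  · by_cases h2 : d = 0 ∧ c = 0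
    · refine ⟨1, 0, by simp, ?_, ?_⟩
      · rw [h1.1, h1.2]; ring
      · rw [h2.1, h2.2]; ring
    · refine ⟨d, -c, by simpa using h2, ?_, ?_⟩
      · linear_combination h
      · ring
  · refine ⟨b, -a, by simpa using h1, ?_, ?_⟩
    · ring
    · linear_combination -h

/-- Kernel vector of the Dickson matrix. -/
lemma dickson_ker {K : Type*} [Field K] (a0 a1 a2 a3 a4 b0 b1 b2 b3 b4 : K)
    (hD : a0 * a1 * a2 * a3 * a4 + 1 + b0 * b1 * b2 * b3 * b4
      - (a1 * b2 * b3 * b4 + a2 * b3 * b4 * b0 + a3 * b4 * b0 * b1 + a4 * b0 * b1 * b2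
        + a0 * b1 * b2 * b3)
      + (a1 * a3 * b4 + a2 * a4 * b0 + a3 * a0 * b1 + a4 * a1 * b2 + a0 * a2 * b3) = 0) :
    ∃ U0 U1 U2 U3 U4 : K, ¬ (U0 = 0 ∧ U1 = 0 ∧ U2 = 0 ∧ U3 = 0 ∧ U4 = 0) ∧
      a0 * U0 + b0 * U1 + U2 = 0 ∧ a1 * U1 + b1 * U2 + U3 = 0 ∧ a2 * U2 + b2 * U3 + U4 = 0 ∧
      a3 * U3 + b3 * U4 + U0 = 0 ∧ a4 * U4 + b4 * U0 + U1 = 0 := by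
  obtain ⟨x, y, hxy, h3, h4⟩ := two_ker
    (a3 * a0 * b1 + b3 * (a0 * a2 - a0 * b1 * b2) + 1)
    (a3 * (b0 * b1 - a1) + b3 * (a2 * b0 - b0 * b1 * b2 + a1 * b2))
    (a4 * (a0 * a2 - a0 * b1 * b2) + b4)
    (a4 * (a2 * b0 - b0 * b1 * b2 + a1 * b2) + 1) (by linear_combination hD)
  refine ⟨x, y, -a0 * x - b0 * y, a0 * b1 * x + (b0 * b1 - a1) * y,
    (a0 * a2 - a0 * b1 * b2) * x + (a2 * b0 - b0 * b1 * b2 + a1 * b2) * y, ?_, ?_, ?_, ?_, ?_, ?_⟩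
  · rintro ⟨h0, h1, -⟩
    exact hxy ⟨h0, h1⟩
  · ring
  · ring
  · ring
  · linear_combination h3
  · linear_combination h4

lemma dickson_root {K : Type*} [Field K] [Finite K] (q : ℕ) (hq1 : 1 < q)
    (hK : Nat.card K = q ^ 5) (fr : K →+* K) (hfr : ∀ x, fr x = x ^ q)
    (hfr5 : ∀ x, fr (fr (fr (fr (fr x)))) = x) (a0 a1 a2 a3 a4 b0 b1 b2 b3 b4 : K)
    (A0 : fr a0 = a1) (A1 : fr a1 = a2) (A2 : fr a2 = a3) (A3 : fr a3 = a4) (A4 : fr a4 = a0)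
    (B0 : fr b0 = b1) (B1 : fr b1 = b2) (B2 : fr b2 = b3) (B3 : fr b3 = b4) (B4 : fr b4 = b0)
    (hD : a0 * a1 * a2 * a3 * a4 + 1 + b0 * b1 * b2 * b3 * b4
      - (a1 * b2 * b3 * b4 + a2 * b3 * b4 * b0 + a3 * b4 * b0 * b1 + a4 * b0 * b1 * b2
        + a0 * b1 * b2 * b3)
      + (a1 * a3 * b4 + a2 * a4 * b0 + a3 * a0 * b1 + a4 * a1 * b2 + a0 * a2 * b3) = 0) :
    ∃ u, u ≠ 0 ∧ a0 * u + b0 * fr u + fr (fr u) = 0 := by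
  obtain ⟨U0, U1, U2, U3, U4, hU, h0, h1, h2, h3, h4⟩ := dickson_ker _ _ _ _ _ _ _ _ _ _ hD
  have hex : ∃ l : K, U0 * l + fr U4 * fr l + fr (fr U3) * fr (fr l)
      + fr (fr (fr U2)) * fr (fr (fr l)) + fr (fr (fr (fr U1))) * fr (fr (fr (fr l))) ≠ 0 := by
    by_contra hcon
    push Not at hcon
    apply hU
    obtain ⟨k0, k1, k2, k3, k4⟩ := exists_lambda q hq1 hK U0 (fr U4) (fr (fr U3))
      (fr (fr (fr U2))) (fr (fr (fr (fr U1)))) (by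
        intro x
        have := hcon x
        have p2 : fr (fr x) = x ^ q ^ 2 := by rw [hfr, hfr, ← pow_mul]; ring
        have p3 : fr (fr (fr x)) = x ^ q ^ 3 := by rw [p2, hfr, ← pow_mul]; ring
        have p4 : fr (fr (fr (fr x))) = x ^ q ^ 4 := by rw [p3, hfr, ← pow_mul]; ring
        rw [p4, p3, p2, hfr x] at this
        exact this)
    simp only [map_eq_zero] at k1 k2 k3 k4
    exact ⟨k0, k4, k3, k2, k1⟩
  obtain ⟨l, hl⟩ := hex
  refine ⟨_, hl, ?_⟩
  have g4 := congrArg fr h4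
  have g3 := congrArg (fun x => fr (fr x)) h3
  have g2 := congrArg (fun x => fr (fr (fr x))) h2
  have g1 := congrArg (fun x => fr (fr (fr (fr x)))) h1
  simp only [map_add, map_mul, map_zero, A0, A1, A2, A3, A4, B0, B1, B2, B3, B4] at g1 g2 g3 g4
  simp only [map_add, map_mul, hfr5]
  linear_combination l * h0 + fr l * g4 + fr (fr l) * g3 + fr (fr (fr l)) * g2
    + fr (fr (fr (fr l))) * g1

lemma det_zero {K : Type*} [Field K] (g0 g1 g2 g3 g4 t0 t1 t2 t3 t4 b0 b1 b2 b3 b4 a0 a1 a2 a3 a4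
    N : K)
    (h0 : t4 * t1 = 1 - t0) (h1 : t0 * t2 = 1 - t1) (h2 : t1 * t3 = 1 - t2)
    (h3 : t2 * t4 = 1 - t3) (h4 : t3 * t0 = 1 - t4)
    (hT : t0 * t1 * t2 * t3 * t4 ≠ 0)
    (hB : b0 * b1 * b2 * b3 * b4 * (t0 * t1 * t2 * t3 * t4) = N)
    (A1 : a1 = g0 * (1 - t0) * b0 * b1) (A2 : a2 = g1 * (1 - t1) * b1 * b2)
    (A3 : a3 = g2 * (1 - t2) * b2 * b3) (A4 : a4 = g3 * (1 - t3) * b3 * b4)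
    (A0 : a0 = g4 * (1 - t4) * b4 * b0)
    (hc : (g0 * g1 * g2 * g3 * g4 * N ^ 2 + 1) * (t0 + t1 + t2 + t3 + t4 - 3)
      + N * (1 - (g0 * (1 - t0) + g1 * (1 - t1) + g2 * (1 - t2) + g3 * (1 - t3) + g4 * (1 - t4))
      + (g0 * g2 * (2 - t0 - t1 - t2) + g1 * g3 * (2 - t1 - t2 - t3) + g2 * g4 * (2 - t2 - t3 - t4)
        + g3 * g0 * (2 - t3 - t4 - t0) + g4 * g1 * (2 - t4 - t0 - t1))) = 0) :
    a0 * a1 * a2 * a3 * a4 + 1 + b0 * b1 * b2 * b3 * b4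
      - (a1 * b2 * b3 * b4 + a2 * b3 * b4 * b0 + a3 * b4 * b0 * b1 + a4 * b0 * b1 * b2
        + a0 * b1 * b2 * b3)
      + (a1 * a3 * b4 + a2 * a4 * b0 + a3 * a0 * b1 + a4 * a1 * b2 + a0 * a2 * b3) = 0 := by
  have hsum : t0 * t1 * t2 * t3 * t4 = t0 + t1 + t2 + t3 + t4 - 3 := by
    linear_combination t1 * t2 * t4 * h4 + (1 - t4) * t2 * h0 - (1 - t4) * h1 - h0 - h3
  have v0 : (1 - t0) * (1 - t2) = 2 - t0 - t1 - t2 := by linear_combination h1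
  have v1 : (1 - t1) * (1 - t3) = 2 - t1 - t2 - t3 := by linear_combination h2
  have v2 : (1 - t2) * (1 - t4) = 2 - t2 - t3 - t4 := by linear_combination h3
  have v3 : (1 - t3) * (1 - t0) = 2 - t3 - t4 - t0 := by linear_combination h4
  have v4 : (1 - t4) * (1 - t1) = 2 - t4 - t0 - t1 := by linear_combination h0
  rw [← v0, ← v1, ← v2, ← v3, ← v4, ← hsum] at hc
  have pv : (1 - t0) * (1 - t1) * (1 - t2) * (1 - t3) * (1 - t4) = (t0 * t1 * t2 * t3 * t4) ^ 2 := by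
    rw [← h0, ← h1, ← h2, ← h3, ← h4]; ring
  have pa : a0 * a1 * a2 * a3 * a4 = g0 * g1 * g2 * g3 * g4 * N ^ 2 := by
    rw [← hB, A0, A1, A2, A3, A4]
    linear_combination g0 * g1 * g2 * g3 * g4 * (b0 * b1 * b2 * b3 * b4) ^ 2 * pv
  rw [pa, A0, A1, A2, A3, A4]
  apply mul_left_cancel₀ hT
  linear_combination hc + (1 - (g0 * (1 - t0) + g1 * (1 - t1) + g2 * (1 - t2) + g3 * (1 - t3)
    + g4 * (1 - t4)) + (g0 * g2 * ((1 - t0) * (1 - t2)) + g1 * g3 * ((1 - t1) * (1 - t3))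
    + g2 * g4 * ((1 - t2) * (1 - t4)) + g3 * g0 * ((1 - t3) * (1 - t0))
    + g4 * g1 * ((1 - t4) * (1 - t1)))) * hB

/-- Existence of the solution `u` of the adjoint equation, over `K`. -/
lemma exists_u {K : Type*} [Field K] [Finite K] (q : ℕ) (hq1 : 1 < q)
    (hK : Nat.card K = q ^ 5) (fr : K →+* K) (hfr : ∀ x, fr x = x ^ q)
    (hfr5 : ∀ x, fr (fr (fr (fr (fr x)))) = x)
    (α β0 β1 β2 β3 β4 g0 g1 g2 g3 g4 t0 t1 t2 t3 t4 m z : K)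
    (B0 : fr β0 = β1) (B1 : fr β1 = β2) (B2 : fr β2 = β3) (B3 : fr β3 = β4) (B4 : fr β4 = β0)
    (G0 : fr g0 = g1) (G1 : fr g1 = g2) (G2 : fr g2 = g3) (G3 : fr g3 = g4) (G4 : fr g4 = g0)
    (T0 : fr t0 = t1) (T1 : fr t1 = t2) (T2 : fr t2 = t3) (T3 : fr t3 = t4) (T4 : fr t4 = t0)
    (hα : fr α = g0 * β0 * β1) (ht : t0 ≠ 0) (ht1 : t0 * t2 = 1 - t1)
    (hm : m ≠ 0) (hm1 : m * (1 - fr m) = 1 - t0)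
    (hmt : m * fr m * fr (fr m) * fr (fr (fr m)) * fr (fr (fr (fr m))) =
      - (t0 * t1 * t2 * t3 * t4))
    (hz : m * (fr (fr z) - z) = fr z - z)
    (hc : (g0 * g1 * g2 * g3 * g4 * (β0 * β1 * β2 * β3 * β4) ^ 2 + 1) *
        (t0 + t1 + t2 + t3 + t4 - 3)
      + (β0 * β1 * β2 * β3 * β4) *
      (1 - (g0 * (1 - t0) + g1 * (1 - t1) + g2 * (1 - t2) + g3 * (1 - t3) + g4 * (1 - t4))
      + (g0 * g2 * (2 - t0 - t1 - t2) + g1 * g3 * (2 - t1 - t2 - t3) + g2 * g4 * (2 - t2 - t3 - t4)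
        + g3 * g0 * (2 - t3 - t4 - t0) + g4 * g1 * (2 - t4 - t0 - t1))) = 0) :
    ∃ u : K, u ≠ 0 ∧
      α * u * (fr (fr z) - fr z) - β0 * fr u * (fr (fr z) - z) + fr (fr u) * (fr z - z) = 0 := by
  have ht1' : t1 ≠ 0 := by rw [← T0]; exact (map_ne_zero fr).2 ht
  have ht2' : t2 ≠ 0 := by rw [← T1]; exact (map_ne_zero fr).2 ht1'
  have ht3' : t3 ≠ 0 := by rw [← T2]; exact (map_ne_zero fr).2 ht2'
  have ht4' : t4 ≠ 0 := by rw [← T3]; exact (map_ne_zero fr).2 ht3'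
  have ht2 := congrArg fr ht1
  simp only [map_sub, map_mul, map_one, T0, T1, T2] at ht2
  have ht3 := congrArg fr ht2
  simp only [map_sub, map_mul, map_one, T1, T2, T3] at ht3
  have ht4 := congrArg fr ht3
  simp only [map_sub, map_mul, map_one, T2, T3, T4] at ht4
  have ht0 := congrArg fr ht4
  simp only [map_sub, map_mul, map_one, T3, T4, T0] at ht0
  obtain ⟨m1, M0⟩ : ∃ y, fr m = y := ⟨_, rfl⟩
  obtain ⟨m2, M1⟩ : ∃ y, fr m1 = y := ⟨_, rfl⟩
  obtain ⟨m3, M2⟩ : ∃ y, fr m2 = y := ⟨_, rfl⟩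
  obtain ⟨m4, M3⟩ : ∃ y, fr m3 = y := ⟨_, rfl⟩
  have M4 : fr m4 = m := by rw [← M3, ← M2, ← M1, ← M0, hfr5]
  rw [M0, M1, M2, M3] at hmt
  rw [M0] at hm1
  have hm1' : m1 ≠ 0 := by rw [← M0]; exact (map_ne_zero fr).2 hm
  have hm2' : m2 ≠ 0 := by rw [← M1]; exact (map_ne_zero fr).2 hm1'
  have hm3' : m3 ≠ 0 := by rw [← M2]; exact (map_ne_zero fr).2 hm2'
  have hm4' : m4 ≠ 0 := by rw [← M3]; exact (map_ne_zero fr).2 hm3'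
  obtain ⟨a0, ha0⟩ : ∃ y, y = α * ((1 - m) / m) := ⟨_, rfl⟩
  have a1eq : fr a0 = g0 * (1 - t0) * (-β0 / m) * (-β1 / m1) := by
    rw [ha0]
    simp only [map_mul, map_div₀, map_sub, map_one, hα, M0]
    rw [← hm1]
    field_simp
  have a2eq := congrArg fr a1eq
  simp only [map_mul, map_div₀, map_sub, map_one, map_neg, G0, T0, B0, B1, M0, M1] at a2eq
  have a3eq := congrArg fr a2eq
  simp only [map_mul, map_div₀, map_sub, map_one, map_neg, G1, T1, B1, B2, M1, M2] at a3eq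
  have a4eq := congrArg fr a3eq
  simp only [map_mul, map_div₀, map_sub, map_one, map_neg, G2, T2, B2, B3, M2, M3] at a4eq
  have a0eq := congrArg fr a4eq
  simp only [map_mul, map_div₀, map_sub, map_one, map_neg, G3, T3, B3, B4, M3, M4, hfr5] at a0eq
  have hT : t0 * t1 * t2 * t3 * t4 ≠ 0 :=
    mul_ne_zero (mul_ne_zero (mul_ne_zero (mul_ne_zero ht ht1') ht2') ht3') ht4'
  have hD := det_zero g0 g1 g2 g3 g4 t0 t1 t2 t3 t4 (-β0 / m) (-β1 / m1) (-β2 / m2) (-β3 / m3)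
    (-β4 / m4) a0 _ _ _ _ (β0 * β1 * β2 * β3 * β4) ht0 ht1 ht2 ht3 ht4 hT (by
      rw [show t0 * t1 * t2 * t3 * t4 = - (m * m1 * m2 * m3 * m4) by rw [hmt, neg_neg]]
      field_simp) a1eq a2eq a3eq a4eq a0eq hc
  obtain ⟨u, hu, h⟩ := dickson_root q hq1 hK fr hfr hfr5 a0 _ _ _ _ (-β0 / m) (-β1 / m1) (-β2 / m2)
    (-β3 / m3) (-β4 / m4) rfl rfl rfl rfl (hfr5 _) (by simp [M0, B0]) (by simp [M1, B1])
    (by simp [M2, B2]) (by simp [M3, B3]) (by simp [M4, B4]) hD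
  refine ⟨u, hu, ?_⟩
  rw [ha0] at h
  field_simp at h
  apply mul_left_cancel₀ hm
  linear_combination (fr z - z) * h + (α * u - β0 * fr u) * hz

end Aux

theorem stmt_16 (q : ℕ) (hq : ∃ p n : ℕ, Nat.Prime p ∧ 0 < n ∧ q = p ^ n)
    (K : Type*) [Field K] (F : Subfield K)
    (hFcard : Nat.card F = q) (hKcard : Nat.card K = q ^ 5)
    (α β : K) (hαβ : α * β ≠ 0) (hne : α ^ q ≠ β ^ (q + 1))
    (hms : IsMaxScattered q F α β) :
    (α ^ q / β ^ (q + 1)) ^ q = α ^ q / β ^ (q + 1) := by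
  have hq1 : 1 < q := by
    obtain ⟨p, n, hp, hn, rfl⟩ := hq
    exact Nat.one_lt_pow hn.ne' hp.one_lt
  have hfin : Finite K := Nat.finite_of_card_ne_zero (by rw [hKcard]; positivity)
  have := Fintype.ofFinite K
  have := Fintype.ofFinite F
  have hF : Fintype.card F = q := by rw [← hFcard, Nat.card_eq_fintype_card]
  obtain ⟨fr, hfr⟩ : ∃ fr : K →+* K, ∀ x, fr x = x ^ q :=
    ⟨(FiniteField.frobeniusAlgHom F K : K →+* K), fun x => by simp [hF]⟩
  obtain ⟨Fr, hFr⟩ : ∃ fr : AlgebraicClosure K →+* AlgebraicClosure K, ∀ x, fr x = x ^ q :=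
    ⟨(FiniteField.frobeniusAlgHom F (AlgebraicClosure K) :
      AlgebraicClosure K →+* AlgebraicClosure K), fun x => by simp [hF]⟩
  let ι : K →+* AlgebraicClosure K := algebraMap K (AlgebraicClosure K)
  have hι : ∀ x, ι (fr x) = Fr (ι x) := fun x => by rw [hfr, hFr, map_pow]
  have hq0 : (q : AlgebraicClosure K) = 0 := by
    have h := Nat.cast_card_eq_zero F
    rw [hF] at h
    have h2 := congrArg (algebraMap F (AlgebraicClosure K)) h
    simpa using h2
  have pw : ∀ {R : Type _} [Field R] (φ : R →+* R), (∀ x, φ x = x ^ q) →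
      ∀ x, φ (φ (φ (φ (φ x)))) = x ^ q ^ 5 := by
    intro R _ φ h x
    simp only [h, ← pow_mul]
    congr 1
    ring
  have hfr5 : ∀ x, fr (fr (fr (fr (fr x)))) = x := by
    intro x
    rw [pw fr hfr, ← hKcard, Nat.card_eq_fintype_card, FiniteField.pow_card]
  have pull : ∀ x, Fr (Fr (Fr (Fr (Fr x)))) = x → ∃ y, ι y = x := by
    intro x hx
    apply pull_back ι x
    rw [hKcard, ← pw Fr hFr, hx]
  have hα : α ≠ 0 := left_ne_zero_of_mul hαβ
  have hβ : β ≠ 0 := right_ne_zero_of_mul hαβ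
  by_contra hcon
  obtain ⟨g0, hg0⟩ : ∃ g, g = α ^ q / β ^ (q + 1) := ⟨_, rfl⟩
  rw [← hg0, ← hfr] at hcon
  have hfα : fr α = g0 * β * fr β := by
    rw [hg0, hfr, hfr, pow_succ]
    field_simp
  have hg1 : g0 ≠ 1 := by
    intro h
    rw [h, eq_comm, div_eq_one_iff_eq (pow_ne_zero _ hβ)] at hg0
    exact hne hg0
  obtain ⟨g1, G0⟩ : ∃ y, fr g0 = y := ⟨_, rfl⟩
  obtain ⟨g2, G1⟩ : ∃ y, fr g1 = y := ⟨_, rfl⟩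
  obtain ⟨g3, G2⟩ : ∃ y, fr g2 = y := ⟨_, rfl⟩
  obtain ⟨g4, G3⟩ : ∃ y, fr g3 = y := ⟨_, rfl⟩
  have G4 : fr g4 = g0 := by rw [← G3, ← G2, ← G1, ← G0, hfr5]
  obtain ⟨β1, B0⟩ : ∃ y, fr β = y := ⟨_, rfl⟩
  obtain ⟨β2, B1⟩ : ∃ y, fr β1 = y := ⟨_, rfl⟩
  obtain ⟨β3, B2⟩ : ∃ y, fr β2 = y := ⟨_, rfl⟩
  obtain ⟨β4, B3⟩ : ∃ y, fr β3 = y := ⟨_, rfl⟩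
  have B4 : fr β4 = β := by rw [← B3, ← B2, ← B1, ← B0, hfr5]
  rw [B0] at hfα
  rw [G0] at hcon
  obtain ⟨N, hN⟩ : ∃ N, N = β * β1 * β2 * β3 * β4 := ⟨_, rfl⟩
  have hN1 : fr N = N := by
    rw [hN]; simp only [map_mul, B0, B1, B2, B3, B4]; ring
  have hN0 : N ≠ 0 := by
    have h1 : β1 ≠ 0 := by rw [← B0]; exact (map_ne_zero fr).2 hβ
    have h2 : β2 ≠ 0 := by rw [← B1]; exact (map_ne_zero fr).2 h1
    have h3 : β3 ≠ 0 := by rw [← B2]; exact (map_ne_zero fr).2 h2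
    have h4 : β4 ≠ 0 := by rw [← B3]; exact (map_ne_zero fr).2 h3
    rw [hN]
    exact mul_ne_zero (mul_ne_zero (mul_ne_zero (mul_ne_zero hβ h1) h2) h3) h4
  obtain ⟨H, hH⟩ : ∃ H, H = g0 * g1 * g2 * g3 * g4 * N ^ 2 + 1 := ⟨_, rfl⟩
  have hH1 : fr H = H := by
    rw [hH]; simp only [map_add, map_mul, map_pow, map_one, G0, G1, G2, G3, G4, hN1]; ring
  have hg3 : g3 ≠ 1 := by
    intro h
    apply hg1
    rw [← G4, ← G3, h, map_one, map_one]
  obtain ⟨t', ht', hsum'⟩ := exists_point q hq1 hq0 Fr hFr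
    (ι (H + N * (g0 - g0 * g2 - g4 * g1 - g3 * g0)))
    (ι (H + N * (g1 - g1 * g3 - g0 * g2 - g4 * g1)))
    (ι (H + N * (g2 - g2 * g4 - g1 * g3 - g0 * g2)))
    (ι (H + N * (g3 - g3 * g0 - g2 * g4 - g1 * g3)))
    (ι (H + N * (g4 - g4 * g1 - g3 * g0 - g2 * g4)))
    (ι (3 * H - N * (1 - (g0 + g1 + g2 + g3 + g4) +
      2 * (g0 * g2 + g1 * g3 + g2 * g4 + g3 * g0 + g4 * g1))))
    (by rw [← hι]; simp only [map_add, map_sub, map_mul, hH1, hN1, G0, G1, G2, G3, G4])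
    (by rw [← hι]; simp only [map_add, map_sub, map_mul, hH1, hN1, G0, G1, G2, G3, G4])
    (by rw [← hι]; simp only [map_add, map_sub, map_mul, hH1, hN1, G0, G1, G2, G3, G4])
    (by rw [← hι]; simp only [map_add, map_sub, map_mul, hH1, hN1, G0, G1, G2, G3, G4])
    (by rw [← hι]; simp only [map_add, map_sub, map_mul, hH1, hN1, G0, G1, G2, G3, G4])
    (by
      rw [← hι]
      congr 1
      simp only [map_add, map_sub, map_mul, map_one, map_ofNat, hH1, hN1, G0, G1, G2, G3, G4]
      ring)
    (by
      intro h
      have h' := ι.injective h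
      have h2 : N * ((g0 - g1) * (1 - g3)) = 0 := by linear_combination h'
      rcases mul_eq_zero.1 h2 with h3 | h3
      · exact hN0 h3
      · rcases mul_eq_zero.1 h3 with h4 | h4
        · exact hcon (by linear_combination -h4)
        · exact hg3 (by linear_combination -h4))
  obtain ⟨ht0, ht5, m', z', hm5, hm0, hm1, hmt, hz5, hz1, hz⟩ := chain q hq1 Fr hFr t' ht'
  obtain ⟨t, rfl⟩ := pull t' ht5
  obtain ⟨m, rfl⟩ := pull m' hm5
  obtain ⟨z, rfl⟩ := pull z' hz5
  simp only [← hι, ← map_mul, ← map_sub, ← map_one ι, ← map_add, ← map_neg] at ht' hsum' hm1 hmt hz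
  replace ht' := ι.injective ht'
  replace hsum' := ι.injective hsum'
  replace hm1 := ι.injective hm1
  replace hmt := ι.injective hmt
  replace hz := ι.injective hz
  replace ht0 : t ≠ 0 := (map_ne_zero ι).1 ht0
  replace hm0 : m ≠ 0 := (map_ne_zero ι).1 hm0
  replace hz1 : fr z ≠ z := by
    intro h; apply hz1; rw [← hι, h]
  obtain ⟨u, hu, huz⟩ := exists_u q hq1 hKcard fr hfr hfr5 α β β1 β2 β3 β4 g0 g1 g2 g3 g4
    t _ _ _ _ m z B0 B1 B2 B3 B4 G0 G1 G2 G3 G4 rfl rfl rfl rfl (hfr5 t) hfα ht0 ht' hm0 hm1 hmt hz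
    (by
      rw [← hN, ← hH]
      linear_combination hsum')
  have hz0 : z ≠ 0 := by
    rintro rfl
    exact hz1 (map_zero fr)
  have hu1 : fr u ≠ 0 := (map_ne_zero fr).2 hu
  have hu2 : fr (fr u) ≠ 0 := (map_ne_zero fr).2 hu1
  have f2 : ∀ x : K, x ^ q ^ 2 = fr (fr x) := by
    intro x
    rw [hfr, hfr, ← pow_mul, sq]
  have hdet : (Tmap q α β u⁻¹).1 * (Tmap q α β (z * u⁻¹)).2 =
      (Tmap q α β u⁻¹).2 * (Tmap q α β (z * u⁻¹)).1 := by
    simp only [Tmap, f2]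
    rw [← hfr, ← hfr]
    simp only [map_mul]
    have k0 : u * u⁻¹ = 1 := mul_inv_cancel₀ hu
    have k1 := congrArg fr k0
    simp only [map_mul, map_one] at k1
    have k2 := congrArg fr k1
    simp only [map_mul, map_one] at k2
    generalize u⁻¹ = x at *
    generalize fr (fr x) = x2 at *
    generalize fr x = x1 at *
    linear_combination x * x1 * x2 * huz - α * x1 * x2 * (fr (fr z) - fr z) * k0
      + β * x * x2 * (fr (fr z) - z) * k1 - x * x1 * (fr z - z) * k2
  have hzF := hms.2 u⁻¹ (z * u⁻¹) (inv_ne_zero hu) (mul_ne_zero hz0 (inv_ne_zero hu)) (by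
    intro hli
    rw [LinearIndependent.pair_iff] at hli
    generalize Tmap q α β u⁻¹ = P at *
    generalize Tmap q α β (z * u⁻¹) = Q at *
    obtain ⟨p1, p2⟩ := P
    obtain ⟨q1, q2⟩ := Q
    simp only [Prod.smul_mk, Prod.mk_add_mk, Prod.mk_eq_zero, smul_eq_mul] at hli hdet
    have k1 := hli q2 (-p2) ⟨by linear_combination hdet, by ring⟩
    have k2 := hli q1 (-p1) ⟨by ring, by linear_combination -hdet⟩
    have k3 := hli 1 0 ⟨by linear_combination -k2.2, by linear_combination -k1.2⟩
    exact one_ne_zero k3.1)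
  rw [mul_div_assoc, div_self (inv_ne_zero hu), mul_one] at hzF
  apply hz1
  have h := FiniteField.pow_card (⟨z, hzF⟩ : F)
  rw [hF] at h
  have h2 := congrArg (Subtype.val) h
  rw [hfr]
  simpa using h2
end

section
/- Let α, β ∈ K with αβ ≠ 0 and α^q ≠ β^{q+1}, suppose L_{α,β} is maximum scattered, and let λ = α^q/β^{q+1} (which lies in F). Then L_{α,β} is equivalent to the Sheekey linear set L_2^η for some η ∈ K if and only if λ^5 N(β)^2 + λ(1 − 3λ) N(β) + 1 = 0. -/
/-- `L_{α,β}` is equivalent to the linear set `L_s^η`: some field automorphism `τ` of `K`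
together with an invertible `K`-linear map of `K²` carries the underlying `F`-subspace
`{(x^τ − α^τ x^{q²τ}, x^{qτ} − β^τ x^{q²τ})}` onto `U_s^η = {(z, η z^{q^s} + z^{q^{5−s}})}`. -/
def IsEquivToL (q : ℕ) {K : Type*} [Field K] (α β η : K) (s : ℕ) : Prop :=
  ∃ τ : K ≃+* K, ∃ M : (K × K) ≃ₗ[K] K × K,
    (fun p => M p) '' {p : K × K | ∃ x : K,
        p = (τ x - τ α * (τ x) ^ q ^ 2, (τ x) ^ q - τ β * (τ x) ^ q ^ 2)} =
      {p : K × K | ∃ z : K, p = (z, η * z ^ q ^ s + z ^ q ^ (5 - s))}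


namespace Aux17

section identities
variable {k : Type*} [Field k]

/-- auxiliary polynomial `Y`. -/
def fY (l0 s t : k) : k := s - 1 - l0 * s * t
/-- coefficient polynomial of the second closing equation. -/
def fc2 (l0 l3 l4 n s t : k) : k :=
  l0 * t + n * l0 * l3 * l4 * (s - 1) * (t - 1) + l4 * fY l0 s t
/-- right-hand side of the first closing equation. -/
def fe1 (l0 l1 l2 l4 n s t : k) : k :=
  1 + n * l0 * l2 * l4 * s * (t - 1) + n * l1 * l4 * fY l0 s t
/-- right-hand side of the second closing equation. -/
def fe2 (l1 l3 l4 n s t : k) : k :=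
  (t - 1) * (1 - l4 * s + n * l1 * l3 * l4 * (s - 1))
/-- first closing equation. -/
def eqA (l0 l1 l2 l4 n s t T : k) : k :=
  (1 - l2) * n * l1 * l4 * fY l0 s t * T - fe1 l0 l1 l2 l4 n s t
/-- second closing equation. -/
def eqB (l0 l1 l3 l4 n s t T : k) : k :=
  l1 * fc2 l0 l3 l4 n s t * T - l0 * fe2 l1 l3 l4 n s t
/-- the plane curve, of bidegree `(2,2)`. -/
def fG (l0 l1 l2 l3 l4 n s t : k) : k :=
  (1 - l2) * n * l0 * l4 * fY l0 s t * fe2 l1 l3 l4 n s t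
    - fc2 l0 l3 l4 n s t * fe1 l0 l1 l2 l4 n s t
/-- coefficients of `fG`. -/
def g00 (l0 l1 l2 l3 l4 n : k) : k :=
  l4 * (l0*l1*l2*l3*l4*n^2 - l0*l2*n - l0*l3*n + l0*n - l1*l4*n + 1)
/-- coefficients of `fG`. -/
def g01 (l0 l1 l2 l3 l4 n : k) : k :=
  l0 * (-l1*l2*l3*l4^2*n^2 + l1*l4*n + l2*l4*n + l3*l4*n - l4*n - 1)
/-- coefficients of `fG`. -/
def g10 (l0 l1 l2 l3 l4 n : k) : k :=
  l4 * (l0^2*l2*l3*l4*n^2 - 2*l0*l1*l2*l3*l4*n^2 + l0*l2*n + l0*l3*n - l0*l4*n - l0*n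
    + 2*l1*l4*n - 1)
/-- coefficients of `fG`. -/
def g11 (l0 l1 l2 l3 l4 n : k) : k :=
  l0 * l4 * (l0*l1*l2*l3*l4*n^2 - 2*l0*l2*l3*l4*n^2 + l0*n + 2*l1*l2*l3*l4*n^2 - 2*l1*l4*n
    - l1*n - l2*n - l3*n + l4*n + n + 1)
/-- coefficients of `fG`. -/
def g12 (l0 l1 l2 l3 l4 n : k) : k := - l0^2*l4*n*(1-l1)*(1-n*l2*l3*l4)
/-- coefficients of `fG`. -/
def g20 (l0 l1 l2 l3 l4 n : k) : k := - l4^2*n*(l1-l0)*(1-n*l0*l2*l3)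
/-- coefficients of `fG`. -/
def g21 (l0 l1 l2 l3 l4 n : k) : k :=
  l0*l4^2*n*(-l0*l1*l2*l3*n + 2*l0*l2*l3*n - l0 - l1*l2*l3*n + 2*l1 - 1)
/-- coefficients of `fG`. -/
def g22 (l0 l1 l2 l3 l4 n : k) : k := l0^2*l4^2*n*(1-l1)*(1-n*l2*l3)
/-- coefficient of `s^2` in `fG`. -/
def fA (l0 l1 l2 l3 l4 n t : k) : k :=
  g22 l0 l1 l2 l3 l4 n * t^2 + g21 l0 l1 l2 l3 l4 n * t + g20 l0 l1 l2 l3 l4 n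
/-- coefficient of `s` in `fG`. -/
def fB (l0 l1 l2 l3 l4 n t : k) : k :=
  g12 l0 l1 l2 l3 l4 n * t^2 + g11 l0 l1 l2 l3 l4 n * t + g10 l0 l1 l2 l3 l4 n
/-- constant coefficient in `fG`. -/
def fC (l0 l1 l2 l3 l4 n t : k) : k :=
  g01 l0 l1 l2 l3 l4 n * t + g00 l0 l1 l2 l3 l4 n

theorem fG_eq (l0 l1 l2 l3 l4 n s t : k) : fG l0 l1 l2 l3 l4 n s t =
    fA l0 l1 l2 l3 l4 n t * s^2 + fB l0 l1 l2 l3 l4 n t * s + fC l0 l1 l2 l3 l4 n t := by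
  simp only [fG, fA, fB, fC, fY, fc2, fe1, fe2, g00, g01, g10, g11, g12, g20, g21, g22]
  ring

/-- the trilinear combination of the two closing equations. -/
def fP (l0 l1 l2 l3 l4 n s t T : k) : k :=
  (1 - l4) * eqA l0 l1 l2 l4 n s t T + n * l4 * (1 - l2) * eqB l0 l1 l3 l4 n s t T
/-- `s`-slope of `fP`. -/
def fP1 (l0 l1 l2 l3 l4 n t T : k) : k :=
  fP l0 l1 l2 l3 l4 n 1 t T - fP l0 l1 l2 l3 l4 n 0 t T
/-- bracket. -/
def fK (l0 l3 l4 n t : k) : k := 1 - n*l0*l3*l4 - l0*(1-n*l3*l4)*t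
/-- the conjugate factor. -/
def fM (l0 l1 l2 l3 l4 n s t T : k) : k :=
  l0 * t * fP1 l0 l1 l2 l3 l4 n t T + fA l0 l1 l2 l3 l4 n t * (s - 1)
/-- linear factor. -/
def fTau (l0 l1 l4 n t : k) : k := (1-l4)*(n*l0*l4*(1-l1)*t + 1 - n*l0*l4)

theorem fP_eq (l0 l1 l2 l3 l4 n s t T : k) : fP l0 l1 l2 l3 l4 n s t T =
    s * fP1 l0 l1 l2 l3 l4 n t T + fP l0 l1 l2 l3 l4 n 0 t T := by
  simp only [fP1, fP, eqA, eqB, fY, fc2, fe1, fe2]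
  ring

theorem id1 (l0 l1 l2 l3 l4 n s t T : k) :
    fP l0 l1 l2 l3 l4 n s t T * fM l0 l1 l2 l3 l4 n s t T =
      n*l4^2*(1-l2)*(1-s)*fK l0 l3 l4 n t * fG l1 l2 l3 l4 l0 n t T
      + fP1 l0 l1 l2 l3 l4 n t T * fG l0 l1 l2 l3 l4 n s t := by
  simp only [fM, fP1, fP, eqA, eqB, fY, fc2, fe1, fe2, fK, fG, fA, g20, g21, g22]
  ring

theorem id2 (l0 l1 l2 l3 l4 n s t T : k) :
    (1-s)*(fA l0 l1 l2 l3 l4 n t * fP l0 l1 l2 l3 l4 n 0 t T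
      - (fA l0 l1 l2 l3 l4 n t * s + fB l0 l1 l2 l3 l4 n t) * fP1 l0 l1 l2 l3 l4 n t T) =
      fTau l0 l1 l4 n t * fM l0 l1 l2 l3 l4 n s t T
      + fP1 l0 l1 l2 l3 l4 n t T * fG l0 l1 l2 l3 l4 n s t := by
  have h1 : fP l0 l1 l2 l3 l4 n 0 t T = - fTau l0 l1 l4 n t - fP1 l0 l1 l2 l3 l4 n t T := by
    simp only [fP1, fP, eqA, eqB, fY, fc2, fe1, fe2, fTau]; ring
  have h2 : fC l0 l1 l2 l3 l4 n t = - l0 * t * fTau l0 l1 l4 n t - fA l0 l1 l2 l3 l4 n t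
      - fB l0 l1 l2 l3 l4 n t := by
    simp only [fA, fB, fC, g00, g01, g10, g11, g12, g20, g21, g22, fTau]; ring
  rw [fG_eq, h1, h2, fM]; ring

theorem id2' (l0 l1 l2 l3 l4 n t T : k) :
    fP l0 l1 l2 l3 l4 n 0 t T + fP1 l0 l1 l2 l3 l4 n t T = - fTau l0 l1 l4 n t := by
  simp only [fP1, fP, eqA, eqB, fY, fc2, fe1, fe2, fTau]; ring

theorem id2'' (l0 l1 l2 l3 l4 n t : k) :
    fA l0 l1 l2 l3 l4 n t + fB l0 l1 l2 l3 l4 n t + fC l0 l1 l2 l3 l4 n t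
      = - l0 * t * fTau l0 l1 l4 n t := by
  simp only [fA, fB, fC, g00, g01, g10, g11, g12, g20, g21, g22, fTau]; ring

theorem id3 (l0 l1 l2 l3 l4 n s t T : k) :
    (s-1)*fK l0 l3 l4 n t * eqA l0 l1 l2 l4 n s t T =
      fY l0 s t * fP l0 l1 l2 l3 l4 n s t T + fG l0 l1 l2 l3 l4 n s t := by
  simp only [fP, eqA, eqB, fY, fc2, fe1, fe2, fK, fG]; ring

/-- auxiliary. -/
def fZ (l0 l1 s t T : k) : k := l1 * fY l0 s t * T + l0 * s * (t - 1)

theorem idF2 (l0 l1 l2 l4 n s t T S : k) :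
    fc2 l1 l4 l0 n t T * (l2 * S * fZ l0 l1 s t T - l1 * fY l0 s t * (T - 1)) =
      fZ l0 l1 s t T * eqB l1 l2 l4 l0 n t T S
      - l1 * (l0 * (1-t)*(1-T) * eqA l0 l1 l2 l4 n s t T) := by
  simp only [eqA, eqB, fZ, fY, fc2, fe1, fe2]; ring

theorem idF1 (l0 l1 l2 l3 l4 n s t T S : k) :
    l4 * ((1-l3)*n*l0*fY l1 t T * (l2 * S * fZ l0 l1 s t T - l1 * fY l0 s t * (T - 1))) =
      l4 * fZ l0 l1 s t T * eqA l1 l2 l3 l0 n t T S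
      - (l0 * fY l1 t T * eqA l0 l1 l2 l4 n s t T - eqB l0 l1 l3 l4 n s t T) := by
  simp only [eqA, eqB, fZ, fY, fc2, fe1, fe2]; ring

end identities
end Aux17

namespace Aux17
section countA
open Polynomial
variable {k : Type*} [Field k]

/-- power-sum like sequence `V^m (b+eV') + V'^m (b+eV)` with `V+V'=E1`, `V V'=E2`. -/
noncomputable def hpol (E1 E2 b : k[X]) (e : k) : ℕ → k[X]
  | 0 => 2 * b + C e * E1
  | 1 => b * E1 + 2 * C e * E2
  | (m+2) => E1 * hpol E1 E2 b e (m+1) - E2 * hpol E1 E2 b e m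

theorem hpol_eval (E1 E2 b : k[X]) (e t V V' : k) (h1 : E1.eval t = V + V')
    (h2 : E2.eval t = V * V') (m : ℕ) :
    (hpol E1 E2 b e m).eval t = V^m * (b.eval t + e * V') + V'^m * (b.eval t + e * V) := by
  induction m using Nat.twoStepInduction with
  | zero => simp [hpol, h1]; ring
  | one => simp [hpol, h1, h2]; ring
  | more m ih1 ih2 =>
    rw [hpol, eval_sub, eval_mul, eval_mul, ih1, ih2, h1, h2]; ring

theorem hpol_deg (E1 E2 b : k[X]) (e : k) (h1 : E1.natDegree ≤ 2) (h2 : E2.natDegree ≤ 3)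
    (hb : b.natDegree ≤ 1) (m : ℕ) :
    (hpol E1 E2 b e (m+2)).natDegree ≤ 2*m+5 ∧
    (hpol E1 E2 b e (m+2)).coeff (2*m+5) = (E1.coeff 2)^(m+1) *
      (b.coeff 1 * E1.coeff 2 + e * E2.coeff 3) ∧
    (hpol E1 E2 b e (m+1)).natDegree ≤ 2*m+3 := by
  induction m with
  | zero =>
    have d0 : (hpol E1 E2 b e 0).natDegree ≤ 2 := by
      rw [hpol]
      refine natDegree_add_le_of_degree_le ?_ ?_
      · refine (natDegree_mul_le).trans ?_
        have : (2 : k[X]).natDegree = 0 := natDegree_ofNat 2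
        omega
      · exact (natDegree_C_mul_le _ _).trans h1
    have d1 : (hpol E1 E2 b e 1).natDegree ≤ 3 := by
      rw [hpol]
      refine natDegree_add_le_of_degree_le ?_ ?_
      · exact (natDegree_mul_le).trans (by omega)
      · have : (2 * C e : k[X]) = C (2 * e) := by rw [C_mul, map_ofNat]
        rw [this]
        exact (natDegree_C_mul_le _ _).trans h2
    have c0 : (hpol E1 E2 b e 0).coeff 2 = e * E1.coeff 2 := by
      have : (2 * b : k[X]) = C 2 * b := by rw [map_ofNat]
      rw [hpol, coeff_add, coeff_C_mul, this, coeff_C_mul,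
        coeff_eq_zero_of_natDegree_lt (lt_of_le_of_lt hb (by norm_num)), mul_zero, zero_add]
    have c1 : (hpol E1 E2 b e 1).coeff 3 = b.coeff 1 * E1.coeff 2 + 2 * e * E2.coeff 3 := by
      have : (2 * C e : k[X]) = C (2 * e) := by rw [C_mul, map_ofNat]
      rw [hpol, coeff_add, this, coeff_C_mul, show 3 = 1 + 2 by norm_num,
        coeff_mul_add_eq_of_natDegree_le hb h1]
    refine ⟨?_, ?_, by simpa using d1⟩
    · show (hpol E1 E2 b e 2).natDegree ≤ 5
      rw [hpol]
      refine (natDegree_sub_le _ _).trans (max_le ?_ ?_)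
      · exact (natDegree_mul_le).trans (by rw [zero_add]; omega)
      · exact (natDegree_mul_le).trans (by omega)
    · show (hpol E1 E2 b e 2).coeff 5 = _
      have e1 : (E1 * hpol E1 E2 b e 1).coeff 5 = E1.coeff 2 * (hpol E1 E2 b e 1).coeff 3 :=
        coeff_mul_add_eq_of_natDegree_le h1 d1
      have e2 : (E2 * hpol E1 E2 b e 0).coeff 5 = E2.coeff 3 * (hpol E1 E2 b e 0).coeff 2 :=
        coeff_mul_add_eq_of_natDegree_le h2 d0
      rw [hpol, coeff_sub, e1, e2, c0, c1]; ring
  | succ m ih =>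
    obtain ⟨i1, i2, i3⟩ := ih
    refine ⟨?_, ?_, by simpa [mul_add, add_assoc] using i1⟩
    · rw [hpol]
      refine (natDegree_sub_le _ _).trans (max_le ?_ ?_)
      · refine (natDegree_mul_le).trans ?_
        have : m + 1 + 1 = m + 2 := rfl
        rw [this]; omega
      · exact (natDegree_mul_le).trans (by omega)
    · have e1 : (E1 * hpol E1 E2 b e (m+2)).coeff (2 + (2*m+5)) =
          E1.coeff 2 * (hpol E1 E2 b e (m+2)).coeff (2*m+5) :=
        coeff_mul_add_eq_of_natDegree_le h1 i1
      have e2 : (E2 * hpol E1 E2 b e (m+1)).coeff (2 + (2*m+5)) = 0 := by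
        apply coeff_eq_zero_of_natDegree_lt
        exact lt_of_le_of_lt (natDegree_mul_le) (by omega)
      rw [hpol, coeff_sub, show 2*(m+1)+5 = 2 + (2*m+5) by ring, show m+1+1 = m+2 from rfl,
        e1, e2, i2]; ring

theorem countA (q : ℕ) (hq : 2 ≤ q) (Kc e b1 b0 ε2 ε1 ε0 η2 η1 η0 w1 w0 : k)
    (hconst : b0^2 + e*b0*ε0 + e^2*(w0*η0) = 0)
    (hlead : Kc^2*η2^q - Kc*(ε2^(q-1)*(b1*ε2+e*(w1*η2))) ≠ 0)
    (S : Finset k) (hS : 2*q+2 ≤ S.card)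
    (h : ∀ t ∈ S, t ≠ 0 ∧ w1*t+w0 ≠ 0 ∧ ∃ V : k,
      V^2 - (ε2*t^2+ε1*t+ε0)*V + (w1*t+w0)*(η2*t^2+η1*t+η0) = 0 ∧
      Kc*t*V^q = (w1*t+w0)^q*(b1*t+b0+e*V)) : False := by
  classical
  obtain ⟨m, rfl⟩ : ∃ m, q = m + 2 := ⟨q - 2, by omega⟩
  set E1 : k[X] := C ε2 * X^2 + C ε1 * X + C ε0 with hE1
  set E2' : k[X] := C η2 * X^2 + C η1 * X + C η0 with hE2'
  set w : k[X] := C w1 * X + C w0 with hw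
  set b : k[X] := C b1 * X + C b0 with hb
  set Bq : k[X] := C (e*b1*ε2+e^2*(w1*η2)) * X^2
    + C (b1^2+e*(b1*ε1+b0*ε2)+e^2*(w1*η1+w0*η2)) * X
    + C (2*b1*b0+e*(b1*ε0+b0*ε1)+e^2*(w1*η0+w0*η1)) with hBq
  have dE1 : E1.natDegree ≤ 2 := natDegree_quadratic_le
  have dE2' : E2'.natDegree ≤ 2 := natDegree_quadratic_le
  have dBq : Bq.natDegree ≤ 2 := natDegree_quadratic_le
  have dw : w.natDegree ≤ 1 := natDegree_linear_le
  have db : b.natDegree ≤ 1 := natDegree_linear_le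
  have dE2 : (w * E2').natDegree ≤ 3 := (natDegree_mul_le).trans (by omega)
  have cE1 : E1.coeff 2 = ε2 := by simp [hE1]
  have cE2' : E2'.coeff 2 = η2 := by simp [hE2']
  have cw : w.coeff 1 = w1 := by simp [hw, coeff_C]
  have cb : b.coeff 1 = b1 := by simp [hb, coeff_C]
  have cE2 : (w * E2').coeff 3 = w1 * η2 := by
    rw [show 3 = 1 + 2 by norm_num, coeff_mul_add_eq_of_natDegree_le dw dE2', cw, cE2']
  obtain ⟨d1, c1, -⟩ := hpol_deg E1 (w*E2') b e dE1 dE2 db m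
  set R : k[X] := C (Kc^2) * (X * E2'^(m+2)) - C Kc * hpol E1 (w*E2') b e (m+2)
    + w^(m+2) * Bq with hR
  have dpow : (E2'^(m+2)).natDegree ≤ (m+2)*2 := natDegree_pow_le_of_le _ dE2'
  have dwp : (w^(m+2)).natDegree ≤ (m+2)*1 := natDegree_pow_le_of_le _ dw
  have dR : R.natDegree ≤ 2*m+5 := by
    refine natDegree_add_le_of_degree_le ((natDegree_sub_le _ _).trans (max_le ?_ ?_)) ?_
    · refine (natDegree_C_mul_le _ _).trans ((natDegree_mul_le).trans ?_)
      have := natDegree_X_le (R := k)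
      omega
    · exact (natDegree_C_mul_le _ _).trans d1
    · exact (natDegree_mul_le).trans (by omega)
  have cR : R.coeff (2*m+5) ≠ 0 := by
    have h1 : (X * E2'^(m+2)).coeff (2*m+5) = η2^(m+2) := by
      rw [show 2*m+5 = ((m+2)*2)+1 by ring, coeff_X_mul,
        coeff_pow_of_natDegree_le dE2', cE2']
    have h2 : (w^(m+2) * Bq).coeff (2*m+5) = 0 := by
      apply coeff_eq_zero_of_natDegree_lt
      exact lt_of_le_of_lt (natDegree_mul_le) (by omega)
    rw [hR, coeff_add, coeff_sub, coeff_C_mul, coeff_C_mul, h1, h2, c1, cE1, cE2, cb, add_zero]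
    simpa using hlead
  have hR0 : R ≠ 0 := by
    intro h0; rw [h0] at cR; simp at cR
  have hsub : S ⊆ R.roots.toFinset := by
    intro t ht
    obtain ⟨ht0, hwt, V, hV, hVq⟩ := h t ht
    rw [Multiset.mem_toFinset, mem_roots hR0, IsRoot.def]
    set V' := ε2*t^2+ε1*t+ε0 - V with hV'
    have hE2t : (w1*t+w0)*(η2*t^2+η1*t+η0) = V * V' := by
      rw [hV']; linear_combination hV
    have ew : w.eval t = w1*t+w0 := by simp [hw]
    have eE2 : E2'.eval t = η2*t^2+η1*t+η0 := by simp [hE2']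
    have eb : b.eval t = b1*t+b0 := by simp [hb]
    have key := hpol_eval E1 (w*E2') b e t V V' (by simp [hE1, hV'])
      (by rw [eval_mul, ew, eE2, hE2t]) (m+2)
    have eB : t * Bq.eval t = (b1*t+b0+e*V)*(b1*t+b0+e*V') := by
      simp only [hBq, eval_add, eval_mul, eval_C, eval_pow, eval_X]
      have : V + V' = ε2*t^2+ε1*t+ε0 := by rw [hV']; ring
      linear_combination (-1)*hconst - e*(b1*t+b0)*this + e^2*hE2t
    have main : t * (w1*t+w0)^(m+2) * R.eval t = 0 := by
      simp only [hR, eval_add, eval_sub, eval_mul, eval_C, eval_pow, eval_X, key, ew, eE2, eb]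
      have e2 : (w1*t+w0)^(m+2) * (η2*t^2+η1*t+η0)^(m+2) = V^(m+2) * V'^(m+2) := by
        rw [← mul_pow, hE2t, mul_pow]
      linear_combination Kc^2*t^2*e2 + ((w1*t+w0)^(m+2))^2*eB
        + (Kc*t*V'^(m+2) - (w1*t+w0)^(m+2)*(b1*t+b0+e*V'))*hVq
    rcases mul_eq_zero.1 main with h0 | h0
    · exact absurd h0 (mul_ne_zero ht0 (pow_ne_zero _ hwt))
    · exact h0
  have := (Finset.card_le_card hsub).trans ((Multiset.toFinset_card_le _).trans (card_roots' R))
  omega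

end countA
end Aux17

namespace Aux17
section cyc
variable {k : Type*} [Field k]

/-- a cyclic orbit of length five of `φ`, together with a fixed nonzero element. -/
structure Cyc (φ : k →+* k) (l0 l1 l2 l3 l4 n : k) : Prop where
  h0 : φ l0 = l1
  h1 : φ l1 = l2
  h2 : φ l2 = l3
  h3 : φ l3 = l4
  h4 : φ l4 = l0
  hn : φ n = n
  n0 : n ≠ 0
  d : l0 ≠ l1

variable {φ : k →+* k} {l0 l1 l2 l3 l4 n : k}

theorem Cyc.sh (h : Cyc φ l0 l1 l2 l3 l4 n) : Cyc φ l1 l2 l3 l4 l0 n :=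
  ⟨h.h1, h.h2, h.h3, h.h4, h.h0, h.hn, h.n0, fun e => h.d (by
    have e2 : l2 = l3 := by rw [← h.h1, ← h.h2, e]
    have e3 : l3 = l4 := by rw [← h.h2, ← h.h3, e2]
    have e4 : l4 = l0 := by rw [← h.h3, ← h.h4, e3]
    rw [e, e2, e3, e4])⟩

theorem Cyc.z (h : Cyc φ l0 l1 l2 l3 l4 n) : l0 ≠ 0 := fun e => h.d (by
  rw [← h.h0, e, map_zero])

theorem Cyc.o (h : Cyc φ l0 l1 l2 l3 l4 n) : 1 - l0 ≠ 0 := fun e => h.d (by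
  have : l0 = 1 := by linear_combination -e
  rw [← h.h0, this, map_one])

theorem Cyc.d01 (h : Cyc φ l0 l1 l2 l3 l4 n) : l0 - l1 ≠ 0 := sub_ne_zero.2 h.d

theorem Cyc.d02 (h : Cyc φ l0 l1 l2 l3 l4 n) : l0 - l2 ≠ 0 := fun e => h.d (by
  have e0 : l0 = l2 := sub_eq_zero.1 e
  have e1 : l1 = l3 := by rw [← h.h0, ← h.h2, e0]
  have e2 : l2 = l4 := by rw [← h.h1, ← h.h3, e1]
  have e3 : l3 = l0 := by rw [← h.h2, ← h.h4, e2]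
  rw [e1, e3])

theorem Cyc.u01 (h : Cyc φ l0 l1 l2 l3 l4 n) : 1 - n*l0*l1 ≠ 0 := fun e => by
  have e1 := congrArg φ e
  simp only [map_sub, map_mul, map_one, map_zero, h.h0, h.h1, h.hn] at e1
  have : n*l1*(l0-l2) = 0 := by linear_combination e1 - e
  exact mul_ne_zero (mul_ne_zero h.n0 h.sh.z) h.d02 this

theorem Cyc.u02 (h : Cyc φ l0 l1 l2 l3 l4 n) : 1 - n*l0*l2 ≠ 0 := fun e => by
  have e1 := congrArg φ (congrArg φ e)
  simp only [map_sub, map_mul, map_one, map_zero, h.h0, h.h1, h.h2, h.h3, h.hn] at e1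
  have : n*l2*(l4-l0) = 0 := by linear_combination e - e1
  exact mul_ne_zero (mul_ne_zero h.n0 h.sh.sh.z) h.sh.sh.sh.sh.d01 this

theorem Cyc.v012 (h : Cyc φ l0 l1 l2 l3 l4 n) : 1 - n*l0*l1*l2 ≠ 0 := fun e => by
  have e1 := congrArg φ e
  simp only [map_sub, map_mul, map_one, map_zero, h.h0, h.h1, h.h2, h.hn] at e1
  have : n*l1*l2*(l3-l0) = 0 := by linear_combination e - e1
  exact mul_ne_zero (mul_ne_zero (mul_ne_zero h.n0 h.sh.z) h.sh.sh.z) h.sh.sh.sh.d02 this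

theorem Cyc.v023 (h : Cyc φ l0 l1 l2 l3 l4 n) : 1 - n*l0*l2*l3 ≠ 0 := fun e => by
  have e1 := congrArg φ (congrArg φ e)
  simp only [map_sub, map_mul, map_one, map_zero, h.h0, h.h1, h.h2, h.h3, h.h4, h.hn] at e1
  have : n*l0*l2*(l3-l4) = 0 := by linear_combination e1 - e
  exact mul_ne_zero (mul_ne_zero (mul_ne_zero h.n0 h.z) h.sh.sh.z) h.sh.sh.sh.d01 this

theorem Cyc.s_ne (h : Cyc φ l0 l1 l2 l3 l4 n) {s t : k} (hs : φ s = t)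
    (hG : fG l0 l1 l2 l3 l4 n s t = 0) : s ≠ 1 := by
  rintro rfl
  rw [map_one] at hs
  subst hs
  have : l0*(1-l4)*(1-n*l4*l0*l1) = 0 := by
    simp only [fG, fY, fc2, fe1, fe2] at hG
    linear_combination -hG
  exact mul_ne_zero (mul_ne_zero h.z h.sh.sh.sh.sh.o) h.sh.sh.sh.sh.v012 this

theorem Cyc.map_eqA (h : Cyc φ l0 l1 l2 l3 l4 n) (s t T : k) :
    φ (eqA l0 l1 l2 l4 n s t T) = eqA l1 l2 l3 l0 n (φ s) (φ t) (φ T) := by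
  simp only [eqA, fe1, fY, map_sub, map_add, map_mul, map_one, h.h0, h.h1, h.h2, h.h4, h.hn]

theorem Cyc.map_eqB (h : Cyc φ l0 l1 l2 l3 l4 n) (s t T : k) :
    φ (eqB l0 l1 l3 l4 n s t T) = eqB l1 l2 l4 l0 n (φ s) (φ t) (φ T) := by
  simp only [eqB, fc2, fe2, fY, map_sub, map_add, map_mul, map_one, h.h0, h.h1, h.h3, h.h4, h.hn]

theorem Cyc.map_fG (h : Cyc φ l0 l1 l2 l3 l4 n) (s t : k) :
    φ (fG l0 l1 l2 l3 l4 n s t) = fG l1 l2 l3 l4 l0 n (φ s) (φ t) := by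
  simp only [fG, fc2, fe1, fe2, fY, map_sub, map_add, map_mul, map_one, h.h0, h.h1, h.h2, h.h3,
    h.h4, h.hn]

theorem tri (f : k → k → k → k) (h1 : ∀ s t T, f s t T = (1 - s) * f 0 t T + s * f 1 t T)
    (h2 : ∀ s t T, f s t T = (1 - t) * f s 0 T + t * f s 1 T)
    (h3 : ∀ s t T, f s t T = (1 - T) * f s t 0 + T * f s t 1)
    (a b c a' b' c' s t T : k) (ha : a * s = a') (hb : b * t = b') (hc : c * T = c') :
    a * b * c * f s t T =
      (c - c') * ((b - b') * ((a - a') * f 0 0 0 + a' * f 1 0 0)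
        + b' * ((a - a') * f 0 1 0 + a' * f 1 1 0))
      + c' * ((b - b') * ((a - a') * f 0 0 1 + a' * f 1 0 1)
        + b' * ((a - a') * f 0 1 1 + a' * f 1 1 1)) := by
  subst ha hb hc
  rw [h3 s t T, h2 s t 0, h2 s t 1, h1 s 0 0, h1 s 1 0, h1 s 0 1, h1 s 1 1]
  ring

theorem Cyc.eqAB (h : Cyc φ l0 l1 l2 l3 l4 n) {s t T : k} (hs : φ s = t) (ht : φ t = T)
    (hG : fG l0 l1 l2 l3 l4 n s t = 0) (hP : fP l0 l1 l2 l3 l4 n s t T = 0) :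
    eqA l0 l1 l2 l4 n s t T = 0 ∧ eqB l0 l1 l3 l4 n s t T = 0 := by
  have hs1 := sub_ne_zero.2 (h.s_ne hs hG)
  have hl4 := h.sh.sh.sh.sh.z
  have hl0 := h.z
  have hl1 := h.sh.z
  have o4 := h.sh.sh.sh.sh.o
  by_cases hK : fK l0 l3 l4 n t = 0
  · have q1 : 1 - n*l2*l3 ≠ 0 := h.sh.sh.u01
    have q2 : 1 - n*l3*l4 ≠ 0 := h.sh.sh.sh.u01
    have q3 : 1 - n*l4*l0 ≠ 0 := h.sh.sh.sh.sh.u01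
    have et : l0*(1-n*l3*l4)*t = 1-n*l0*l3*l4 := by
      rw [fK] at hK; linear_combination -hK
    have es : l4*(1-n*l2*l3)*s = 1-n*l4*l2*l3 := by
      apply φ.injective
      simp only [map_sub, map_mul, map_one, h.h2, h.h3, h.h4, h.hn, hs]
      exact et
    have eT : l1*(1-n*l4*l0)*T = 1-n*l1*l4*l0 := by
      have := congrArg φ et
      simpa only [map_sub, map_mul, map_one, h.h0, h.h3, h.h4, h.hn, ht] using this
    have t2 : n^2*l0*l1*l2*l3*l4 - n*(l0*l2+l1*l4+l2*l3) + n*l2 + 1 = 0 := by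
      have e : (l4*(1-n*l2*l3)) * (l0*(1-n*l3*l4)) * (l1*(1-n*l4*l0)) *
          fP l0 l1 l2 l3 l4 n s t T = -(l0*l1*l4*(1-l4)*(1-n*l4*l0)*(1-n*l3*l4)) *
          (n^2*l0*l1*l2*l3*l4 - n*(l0*l2+l1*l4+l2*l3) + n*l2 + 1) := by
        rw [tri (fP l0 l1 l2 l3 l4 n) ?_ ?_ ?_ _ _ _ _ _ _ s t T es et eT]
        all_goals simp only [fP, eqA, eqB, fY, fc2, fe1, fe2]
        · ring
        all_goals intros; ring
      rw [hP, mul_zero] at e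
      refine (mul_eq_zero.1 e.symm).resolve_left (neg_ne_zero.2 ?_)
      exact mul_ne_zero (mul_ne_zero (mul_ne_zero (mul_ne_zero (mul_ne_zero hl0 hl1) hl4) o4) q3) q2
    have t3 : n^2*l0*l1*l2*l3*l4 - n*(l1*l3+l2*l0+l3*l4) + n*l3 + 1 = 0 := by
      have := congrArg φ t2
      simp only [map_sub, map_add, map_mul, map_pow, map_one, map_zero, h.h0, h.h1, h.h2, h.h3,
        h.h4, h.hn] at this
      linear_combination this
    have hB : eqB l0 l1 l3 l4 n s t T = 0 := by
      have e : (l4*(1-n*l2*l3)) * (l0*(1-n*l3*l4)) * (l1*(1-n*l4*l0)) *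
          eqB l0 l1 l3 l4 n s t T = l0*l1*l4*(1-l4) *
          ((1-l0)*(n^2*l0*l1*l2*l3*l4 - n*(l1*l3+l2*l0+l3*l4) + n*l3 + 1) +
          (l0-n*l0*l3*l4)*(n^2*l0*l1*l2*l3*l4 - n*(l0*l2+l1*l4+l2*l3) + n*l2 + 1)) := by
        rw [tri (eqB l0 l1 l3 l4 n) ?_ ?_ ?_ _ _ _ _ _ _ s t T es et eT]
        all_goals simp only [eqB, fY, fc2, fe2]
        · ring
        all_goals intros; ring
      rw [t2, t3, mul_zero, mul_zero, add_zero, mul_zero] at e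
      exact (mul_eq_zero.1 e).resolve_left (mul_ne_zero (mul_ne_zero (mul_ne_zero hl4 q1)
        (mul_ne_zero hl0 q2)) (mul_ne_zero hl1 q3))
    refine ⟨?_, hB⟩
    rw [fP, hB, mul_zero, add_zero] at hP
    exact (mul_eq_zero.1 hP).resolve_left o4
  · have e := id3 l0 l1 l2 l3 l4 n s t T
    rw [hP, hG, mul_zero, add_zero] at e
    have hA := (mul_eq_zero.1 e).resolve_left (mul_ne_zero hs1 hK)
    refine ⟨hA, ?_⟩
    rw [fP, hA, mul_zero, zero_add] at hP
    exact (mul_eq_zero.1 hP).resolve_left (mul_ne_zero (mul_ne_zero h.n0 hl4) h.sh.sh.o)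

theorem Cyc.delta (h : Cyc φ l0 l1 l2 l3 l4 n) {s t T S : k} (hs : φ s = t) (ht : φ t = T)
    (hT : φ T = S) (hs1 : s ≠ 1) (hA : eqA l0 l1 l2 l4 n s t T = 0)
    (hB : eqB l0 l1 l3 l4 n s t T = 0) :
    l2 * S * fZ l0 l1 s t T - l1 * fY l0 s t * (T - 1) = 0 := by
  have hA1 : eqA l1 l2 l3 l0 n t T S = 0 := by
    have := h.map_eqA s t T
    rw [hA, map_zero, hs, ht, hT] at this
    exact this.symm
  have hB1 : eqB l1 l2 l4 l0 n t T S = 0 := by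
    have := h.map_eqB s t T
    rw [hB, map_zero, hs, ht, hT] at this
    exact this.symm
  by_contra hD
  have e1 := idF1 l0 l1 l2 l3 l4 n s t T S
  have e2 := idF2 l0 l1 l2 l4 n s t T S
  rw [hA, hB, hA1] at e1
  rw [hA, hB1] at e2
  have c2 : fc2 l1 l4 l0 n t T = 0 := by
    refine (mul_eq_zero.1 (e2.trans (by ring))).resolve_right hD
  have y1 : fY l1 t T = 0 := by
    have e1' := (mul_eq_zero.1 (e1.trans (by ring))).resolve_left h.sh.sh.sh.sh.z
    exact (mul_eq_zero.1 ((mul_eq_zero.1 e1').resolve_right hD)).resolve_left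
      (mul_ne_zero (mul_ne_zero h.sh.sh.sh.o h.n0) h.z)
  have f1 : l1 * T * (1 + n*l4*l0*t*l1*(T-1)) = 0 := by
    rw [fc2, y1] at c2
    rw [fY] at y1
    linear_combination c2 - n*l1*l4*l0*(T-1)*y1
  have f2 : 1 + n*l1*l3*l0*t*(T-1) = 0 := by
    rw [eqA, fe1, y1] at hA1
    linear_combination -hA1
  rcases mul_eq_zero.1 f1 with h1 | h1
  · have hT0 : T = 0 := (mul_eq_zero.1 h1).resolve_left h.sh.z
    rw [hT0, fY] at y1
    have : t = 1 := by linear_combination y1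
    exact hs1 (φ.injective (by rw [hs, this, map_one]))
  · have h3 : (l3 - l4) * (n*l1*l0*t*(T-1)) = 0 := by linear_combination f2 - h1
    have h4 := (mul_eq_zero.1 h3).resolve_left h.sh.sh.sh.d01
    have : (1:k) = 0 := by linear_combination f2 - l3 * h4
    exact one_ne_zero this

end cyc
end Aux17

namespace Aux17
section minus
variable {k : Type*} [Field k]

theorem relM (l0 l1 l2 l3 l4 n s t T : k) :
    -(l4*(1-n*l2*l3)) * (1-n*l3*l4) * fM l0 l1 l2 l3 l4 n s t T =
      l4*(1-n*l2*l3)*l0*(1-l2)*n*l4 * t * ((l0*(1-n*l3*l4)*t-(1-n*l3*l4*l0))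
        * (l1*(1-n*l3*l4)*T-(1-n*l1*l3*l4)))
      + ((l4*(1-n*l2*l3)*l0*(n*l4*(l0*l1*l2*l3*l4*n - l0*l1*l3*l4*n - l0*l2 - l0*l3*l4^2*n
        + l0*l3*l4*n + l0*l4 - l1*l2*l3*l4*n + l1*l3*l4^2*n - l1*l4 + l1 + l2 - 1))
        - (1-n*l3*l4)*(1-l4)*g21 l0 l1 l2 l3 l4 n) * t
        + (-(1-n*l3*l4)*(1-l4)*g20 l0 l1 l2 l3 l4 n))
      + (-(1-n*l3*l4))*(fA l0 l1 l2 l3 l4 n t * (l4*(1-n*l2*l3)*s-(1-n*l2*l3*l4))) := by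
  simp only [fM, fP1, fP, eqA, eqB, fY, fc2, fe1, fe2, fA, g20, g21, g22]
  ring

theorem relA (l0 l1 l2 l3 l4 n t : k) : fA l0 l1 l2 l3 l4 n t =
    ((n*l4^2*l0*(1-l1))*t + (-(n*l4^2*(l0-l1)))) * (l0*(1-n*l2*l3)*t + -(1-n*l0*l2*l3)) := by
  simp only [fA, g20, g21, g22]; ring

/-- linear coefficient. -/
def gam1 (l0 l1 l2 l3 l4 n : k) : k := (1-n*l2*l3*l4)^2 * g21 l0 l1 l2 l3 l4 n
  + (1-n*l2*l3*l4)*(l4*(1-n*l2*l3))*g11 l0 l1 l2 l3 l4 n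
  + (l4*(1-n*l2*l3))^2 * g01 l0 l1 l2 l3 l4 n
/-- constant coefficient. -/
def gam0 (l0 l1 l2 l3 l4 n : k) : k := (1-n*l2*l3*l4)^2 * g20 l0 l1 l2 l3 l4 n
  + (1-n*l2*l3*l4)*(l4*(1-n*l2*l3))*g10 l0 l1 l2 l3 l4 n
  + (l4*(1-n*l2*l3))^2 * g00 l0 l1 l2 l3 l4 n
/-- trace coefficients. -/
def eps2 (l0 l1 l2 l3 l4 n : k) : k := -(l4*(1-n*l2*l3)*g12 l0 l1 l2 l3 l4 n
  + 2*(1-n*l2*l3*l4)*g22 l0 l1 l2 l3 l4 n)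
/-- trace coefficients. -/
def eps1 (l0 l1 l2 l3 l4 n : k) : k := -(l4*(1-n*l2*l3)*g11 l0 l1 l2 l3 l4 n
  + 2*(1-n*l2*l3*l4)*g21 l0 l1 l2 l3 l4 n)
/-- trace coefficients. -/
def eps0 (l0 l1 l2 l3 l4 n : k) : k := -(l4*(1-n*l2*l3)*g10 l0 l1 l2 l3 l4 n
  + 2*(1-n*l2*l3*l4)*g20 l0 l1 l2 l3 l4 n)
/-- linear coefficient. -/
def bet1 (l0 l1 l2 l3 l4 n : k) : k :=
  l4*(1-n*l2*l3)*l0*(n*l4*(l0*l1*l2*l3*l4*n - l0*l1*l3*l4*n - l0*l2 - l0*l3*l4^2*n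
        + l0*l3*l4*n + l0*l4 - l1*l2*l3*l4*n + l1*l3*l4^2*n - l1*l4 + l1 + l2 - 1))
        - (1-n*l3*l4)*(1-l4)*g21 l0 l1 l2 l3 l4 n

theorem relV (l0 l1 l2 l3 l4 n s t : k)
    (hG : fG l0 l1 l2 l3 l4 n s t = 0) :
    (fA l0 l1 l2 l3 l4 n t * (l4*(1-n*l2*l3)*s-(1-n*l2*l3*l4)))^2
    - (eps2 l0 l1 l2 l3 l4 n * t^2 + eps1 l0 l1 l2 l3 l4 n * t + eps0 l0 l1 l2 l3 l4 n)
      * (fA l0 l1 l2 l3 l4 n t * (l4*(1-n*l2*l3)*s-(1-n*l2*l3*l4)))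
    + ((n*l4^2*l0*(1-l1))*t + (-(n*l4^2*(l0-l1)))) *
      ((l0*(1-n*l2*l3))*gam1 l0 l1 l2 l3 l4 n * t^2
      + ((l0*(1-n*l2*l3))*gam0 l0 l1 l2 l3 l4 n + (-(1-n*l0*l2*l3))*gam1 l0 l1 l2 l3 l4 n) * t
      + (-(1-n*l0*l2*l3))*gam0 l0 l1 l2 l3 l4 n) = 0 := by
  rw [fG_eq] at hG
  have e1 : eps2 l0 l1 l2 l3 l4 n * t^2 + eps1 l0 l1 l2 l3 l4 n * t + eps0 l0 l1 l2 l3 l4 n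
      = -(l4*(1-n*l2*l3)*fB l0 l1 l2 l3 l4 n t
        + 2*(1-n*l2*l3*l4)*fA l0 l1 l2 l3 l4 n t) := by
    simp only [eps2, eps1, eps0, fA, fB]; ring
  have e2 : gam1 l0 l1 l2 l3 l4 n * t + gam0 l0 l1 l2 l3 l4 n
      = (1-n*l2*l3*l4)^2 * fA l0 l1 l2 l3 l4 n t
      + (1-n*l2*l3*l4)*(l4*(1-n*l2*l3))*fB l0 l1 l2 l3 l4 n t
      + (l4*(1-n*l2*l3))^2 * fC l0 l1 l2 l3 l4 n t := by
    simp only [gam1, gam0, fA, fB, fC, g12, g22]; ring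
  have e3 := relA l0 l1 l2 l3 l4 n t
  rw [e1]
  linear_combination (fA l0 l1 l2 l3 l4 n t * (l4*(1-n*l2*l3))^2) * hG
    - (gam1 l0 l1 l2 l3 l4 n * t + gam0 l0 l1 l2 l3 l4 n) * e3
    + fA l0 l1 l2 l3 l4 n t * e2

theorem relConst (l0 l1 l2 l3 l4 n : k) :
    (-(1-n*l3*l4)*(1-l4)*g20 l0 l1 l2 l3 l4 n)^2
    + (-(1-n*l3*l4)) * (-(1-n*l3*l4)*(1-l4)*g20 l0 l1 l2 l3 l4 n) * eps0 l0 l1 l2 l3 l4 n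
    + (-(1-n*l3*l4))^2 * ((-(n*l4^2*(l0-l1))) * ((-(1-n*l0*l2*l3))*gam0 l0 l1 l2 l3 l4 n)) = 0 := by
  have : (1-l4)^2*g20 l0 l1 l2 l3 l4 n + (1-l4)*eps0 l0 l1 l2 l3 l4 n +
      gam0 l0 l1 l2 l3 l4 n = 0 := by
    simp only [eps0, gam0, g00, g10, g20]; ring
  have h2 : (-(n*l4^2*(l0-l1))) * (-(1-n*l0*l2*l3)) = g20 l0 l1 l2 l3 l4 n := by
    simp only [g20]; ring
  linear_combination (1-n*l3*l4)^2 * g20 l0 l1 l2 l3 l4 n * this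
    + (1-n*l3*l4)^2 * gam0 l0 l1 l2 l3 l4 n * h2

theorem eps2_eq (l0 l1 l2 l3 l4 n : k) : eps2 l0 l1 l2 l3 l4 n =
    -(l0^2*l4^2*n*(1-l1)*(1-n*l2*l3)*(1-n*l2*l3*l4)) := by
  simp only [eps2, g12, g22]; ring

theorem gam1_eq (l0 l1 l2 l3 l4 n : k) : gam1 l0 l1 l2 l3 l4 n =
    l0*l4^2*n*(1-l4)*(l0*l1*l2^2*l3^2*l4*n^2 - l0*l1*l2*l3*n - l0*l2^2*l3^2*l4*n^2 + l0*l2*l3*n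
    - l1*l2*l3*l4*n + l1 - l2^2*l3^2*n + l2^2*l3*n + l2*l3^2*n + l2*l3*l4*n - l2*l3*n + l2*l3
    - l2 - l3) := by
  simp only [gam1, g01, g11, g21]; ring

theorem relLead (l0 l1 l2 l3 l4 n : k) :
    (-(l4*(1-n*l2*l3)*l0*(1-l2)*n*l4)) * ((l1*(1-n*l3*l4))*gam1 l1 l2 l3 l4 l0 n)
      * eps2 l0 l1 l2 l3 l4 n
    - eps2 l1 l2 l3 l4 l0 n * (bet1 l0 l1 l2 l3 l4 n * eps2 l0 l1 l2 l3 l4 n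
      + (-(1-n*l3*l4)) * ((n*l4^2*l0*(1-l1)) * ((l0*(1-n*l2*l3))*gam1 l0 l1 l2 l3 l4 n))) =
    l0^5*l1^2*l4^4*n^3*(1-l1)*(1-l2)*(1-l3)*(1-l4)*(l2-l0)*(1-n*l2*l3)^2*(1-n*l3*l4)^3 := by
  have e1 : bet1 l0 l1 l2 l3 l4 n * eps2 l0 l1 l2 l3 l4 n
      + (-(1-n*l3*l4)) * ((n*l4^2*l0*(1-l1)) * ((l0*(1-n*l2*l3))*gam1 l0 l1 l2 l3 l4 n)) =
      l0^3*l4^4*n^2*(1-l1)*(1-l2)*(1-n*l2*l3)^2*(-l0*l1*l2*l3^2*l4^2*n^2 + l0*l1*l3*l4*n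
      + l0*l2*l3*l4*n - l0 + l1*l2*l3^2*l4^2*n^2 - l1*l3*l4*n - l2*l3*l4*n + l3^2*l4^2*n
      - l3^2*l4*n - l3*l4^2*n + l3*l4*n - l3*l4 + l3 + l4) := by
    rw [eps2_eq, gam1_eq]
    simp only [bet1, g21]; ring
  rw [e1, gam1_eq, eps2_eq, eps2_eq]
  ring

end minus
end Aux17

namespace Aux17
section main
open Polynomial
variable {k : Type*} [Field k]

theorem roots_of_sep [IsAlgClosed k] (p : k[X]) (h0 : p ≠ 0)
    (hs : ∀ x, p.eval x = 0 → p.derivative.eval x ≠ 0) :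
    ∃ S : Finset k, S.card = p.natDegree ∧ ∀ x ∈ S, p.eval x = 0 := by
  classical
  refine ⟨p.roots.toFinset, ?_, ?_⟩
  · rw [Multiset.toFinset_card_of_nodup]
    · exact (IsAlgClosed.splits p).natDegree_eq_card_roots.symm
    · rw [Multiset.nodup_iff_count_le_one]
      intro x
      rw [count_roots]
      by_contra hlt
      push Not at hlt
      obtain ⟨h1, h2⟩ := (one_lt_rootMultiplicity_iff_isRoot h0).1 hlt
      exact hs x h1 h2
  · intro x hx
    rw [Multiset.mem_toFinset, mem_roots h0] at hx
    exact hx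

theorem gpoly_deg (q : ℕ) (hq : 2 ≤ q) (a b c d e f g h : k) (ha : a ≠ 0) :
    (C a * X^(2*q+2) + (C b * X^(q+2) + C c * X^2 + C d * X^(2*q+1) + C e * X^(q+1)
      + C f * X^1 + C g * X^q + C h)).natDegree = 2*q+2 := by
  rw [natDegree_add_eq_left_of_natDegree_lt, natDegree_C_mul_X_pow _ _ ha]
  rw [natDegree_C_mul_X_pow _ _ ha]
  have hm : ∀ (z : k) (m : ℕ), m ≤ 2*q+1 → (C z * X^m).natDegree ≤ 2*q+1 :=
    fun z m hm => (natDegree_C_mul_X_pow_le _ _).trans hm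
  refine Nat.lt_succ_of_le ?_
  exact natDegree_add_le_of_degree_le (natDegree_add_le_of_degree_le (natDegree_add_le_of_degree_le (natDegree_add_le_of_degree_le (natDegree_add_le_of_degree_le (natDegree_add_le_of_degree_le (hm b _ (by omega)) (hm c _ (by omega))) (hm d _ (by omega))) (hm e _ (by omega))) (hm f _ (by omega))) (hm g _ (by omega))) (by simp)

variable {φ : k →+* k} {l0 l1 l2 l3 l4 n : k}

theorem Cyc.main [IsAlgClosed k] (h : Cyc φ l0 l1 l2 l3 l4 n) (q : ℕ) (hq : 2 ≤ q)
    (hqk : (q : k) = 0) (hφ : ∀ x, φ x = x ^ q)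
    (Hfix : ∀ s t T S, φ s = t → φ t = T → φ T = S → s ≠ 1 → eqA l0 l1 l2 l4 n s t T = 0 →
      l2 * S * fZ l0 l1 s t T - l1 * fY l0 s t * (T - 1) = 0 → False) : False := by
  classical
  have hl0 := h.z
  have hl1 := h.sh.z
  have hl4 := h.sh.sh.sh.sh.z
  have o0 := h.o
  have o1 := h.sh.o
  have o2 := h.sh.sh.o
  have o3 := h.sh.sh.sh.o
  have o4 := h.sh.sh.sh.sh.o
  have n0 := h.n0
  have u23 := h.sh.sh.u01
  have u34 := h.sh.sh.sh.u01
  have v234 := h.sh.sh.v012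
  have v023 := h.v023
  have v134 := h.sh.v023
  have d01 := h.d01
  have d02 : l2 - l0 ≠ 0 := by
    intro e; exact h.d02 (by linear_combination -e)
  have hg22 : g22 l0 l1 l2 l3 l4 n ≠ 0 := by
    simp only [g22]
    exact mul_ne_zero (mul_ne_zero (mul_ne_zero (mul_ne_zero (pow_ne_zero _ hl0)
      (pow_ne_zero _ hl4)) n0) o1) u23
  -- every root of the curve polynomial lies on the component `fM = 0`
  have hM : ∀ s t T, φ s = t → φ t = T → fG l0 l1 l2 l3 l4 n s t = 0 →
      fP l0 l1 l2 l3 l4 n s t T ≠ 0 ∧ fM l0 l1 l2 l3 l4 n s t T = 0 := by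
    intro s t T hs ht hG
    have hP : fP l0 l1 l2 l3 l4 n s t T ≠ 0 := by
      intro hP
      obtain ⟨hA, hB⟩ := h.eqAB hs ht hG hP
      have hs1 := h.s_ne hs hG
      exact Hfix s t T _ hs ht rfl hs1 hA (h.delta hs ht rfl hs1 hA hB)
    refine ⟨hP, ?_⟩
    have hG1 : fG l1 l2 l3 l4 l0 n t T = 0 := by
      have := h.map_fG s t
      rw [hG, map_zero, hs, ht] at this
      exact this.symm
    have e := id1 l0 l1 l2 l3 l4 n s t T
    rw [hG, hG1, mul_zero, mul_zero, add_zero] at e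
    exact (mul_eq_zero.1 e).resolve_left hP
  have ht0 : ∀ s t T, φ s = t → φ t = T → fG l0 l1 l2 l3 l4 n s t = 0 → t ≠ 0 := by
    rintro s t T hs ht hG rfl
    have hs0 : s = 0 := φ.injective (by rw [hs, map_zero])
    have e := (hM s 0 T hs ht hG).2
    rw [hs0, fM] at e
    have e' : n*l4^2*(l0-l1)*(1-n*l0*l2*l3) = 0 := by
      simp only [fA, g20] at e
      linear_combination -e
    exact mul_ne_zero (mul_ne_zero (mul_ne_zero n0 (pow_ne_zero _ hl4)) d01) v023 e'
  have hdbl : ∀ s t T, φ s = t → φ t = T → fG l0 l1 l2 l3 l4 n s t = 0 →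
      2 * fA l0 l1 l2 l3 l4 n t * s + fB l0 l1 l2 l3 l4 n t ≠ 0 := by
    intro s t T hs ht hG hD
    obtain ⟨hP, hM0⟩ := hM s t T hs ht hG
    have hs1 : 1 - s ≠ 0 := sub_ne_zero.2 (h.s_ne hs hG).symm
    have e := id2 l0 l1 l2 l3 l4 n s t T
    rw [hM0, hG, mul_zero, mul_zero, add_zero] at e
    have e1 := (mul_eq_zero.1 e).resolve_left hs1
    have e2 : fA l0 l1 l2 l3 l4 n t * fP l0 l1 l2 l3 l4 n s t T = 0 := by
      rw [fP_eq]
      linear_combination e1 + fP1 l0 l1 l2 l3 l4 n t T * hD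
    have hA := (mul_eq_zero.1 e2).resolve_right hP
    have hB : fB l0 l1 l2 l3 l4 n t = 0 := by
      rw [hA] at hD; linear_combination hD
    have hC : fC l0 l1 l2 l3 l4 n t = 0 := by
      have := fG_eq l0 l1 l2 l3 l4 n s t
      rw [hG, hA, hB] at this
      linear_combination -this
    have e3 := id2'' l0 l1 l2 l3 l4 n t
    rw [hA, hB, hC] at e3
    have t0 := ht0 s t T hs ht hG
    have hTau : fTau l0 l1 l4 n t = 0 := by
      have : (l0 * t) * fTau l0 l1 l4 n t = 0 := by linear_combination e3
      exact (mul_eq_zero.1 this).resolve_left (mul_ne_zero hl0 t0)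
    have hP1 : fP1 l0 l1 l2 l3 l4 n t T = 0 := by
      rw [fM, hA] at hM0
      have : (l0 * t) * fP1 l0 l1 l2 l3 l4 n t T = 0 := by linear_combination hM0
      exact (mul_eq_zero.1 this).resolve_left (mul_ne_zero hl0 t0)
    have e4 := id2' l0 l1 l2 l3 l4 n t T
    apply hP
    rw [fP_eq]
    rw [hTau, hP1] at e4
    rw [hP1]
    linear_combination e4
  have hw : ∀ s t T, φ s = t → φ t = T → fG l0 l1 l2 l3 l4 n s t = 0 →
      (n*l4^2*l0*(1-l1))*t + (-(n*l4^2*(l0-l1))) ≠ 0 := by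
    intro s t T hs ht hG hw
    obtain ⟨hP, hM0⟩ := hM s t T hs ht hG
    have t0 := ht0 s t T hs ht hG
    have hA : fA l0 l1 l2 l3 l4 n t = 0 := by rw [relA, hw, zero_mul]
    have hP1 : fP1 l0 l1 l2 l3 l4 n t T = 0 := by
      rw [fM, hA] at hM0
      have : (l0 * t) * fP1 l0 l1 l2 l3 l4 n t T = 0 := by linear_combination hM0
      exact (mul_eq_zero.1 this).resolve_left (mul_ne_zero hl0 t0)
    have ha : l0*(1-l1)*t = l0-l1 := by
      have : (n*l4^2) * (l0*(1-l1)*t - (l0-l1)) = 0 := by linear_combination hw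
      exact sub_eq_zero.1 ((mul_eq_zero.1 this).resolve_left
        (mul_ne_zero n0 (pow_ne_zero _ hl4)))
    have e : l0*l1*l4*n*(1-l0)*(1-l2)*(1-n*l1*l3*l4)*(T-1) = 0 := by
      have hb : fP1 l0 l1 l2 l3 l4 n t T = fP1 l0 l1 l2 l3 l4 n 0 T
          + t * (fP1 l0 l1 l2 l3 l4 n 1 T - fP1 l0 l1 l2 l3 l4 n 0 T) := by
        simp only [fP1, fP, eqA, eqB, fY, fc2, fe1, fe2]; ring
      have hc : l0*(1-l1) * fP1 l0 l1 l2 l3 l4 n 0 T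
          + (l0-l1) * (fP1 l0 l1 l2 l3 l4 n 1 T - fP1 l0 l1 l2 l3 l4 n 0 T) =
          l0*l1*l4*n*(1-l0)*(1-l2)*(1-n*l1*l3*l4)*(T-1) := by
        simp only [fP1, fP, eqA, eqB, fY, fc2, fe1, fe2]; ring
      rw [hP1] at hb
      rw [← hc]
      linear_combination (-(l0*(1-l1))) * hb
        - (fP1 l0 l1 l2 l3 l4 n 1 T - fP1 l0 l1 l2 l3 l4 n 0 T) * ha
    have hT : T = 1 := sub_eq_zero.1 ((mul_eq_zero.1 e).resolve_left
      (mul_ne_zero (mul_ne_zero (mul_ne_zero (mul_ne_zero (mul_ne_zero (mul_ne_zero hl0 hl1) hl4)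
        n0) o0) o2) v134))
    have ht1 : t = 1 := φ.injective (by rw [ht, hT, map_one])
    have : l1 * (1 - l0) = 0 := by rw [ht1] at ha; linear_combination ha
    exact mul_ne_zero hl1 o0 this
  -- the curve polynomial
  obtain ⟨R, hRc, hR⟩ : ∃ R : Finset k, R.card = 2*q+2 ∧
      ∀ s ∈ R, fG l0 l1 l2 l3 l4 n s (φ s) = 0 := by
    set g : k[X] := C (g22 l0 l1 l2 l3 l4 n) * X^(2*q+2) + (C (g21 l0 l1 l2 l3 l4 n) * X^(q+2)
      + C (g20 l0 l1 l2 l3 l4 n) * X^2 + C (g12 l0 l1 l2 l3 l4 n) * X^(2*q+1)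
      + C (g11 l0 l1 l2 l3 l4 n) * X^(q+1) + C (g10 l0 l1 l2 l3 l4 n) * X^1
      + C (g01 l0 l1 l2 l3 l4 n) * X^q + C (g00 l0 l1 l2 l3 l4 n)) with hg
    have hdeg : g.natDegree = 2*q+2 := gpoly_deg q hq _ _ _ _ _ _ _ _ hg22
    have hg0 : g ≠ 0 := by
      intro h0; rw [h0, natDegree_zero] at hdeg; omega
    have hev : ∀ s, g.eval s = fG l0 l1 l2 l3 l4 n s (φ s) := by
      intro s
      rw [fG_eq, hφ, hg]
      simp only [eval_add, eval_mul, eval_C, eval_pow, eval_X, fA, fB, fC]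
      ring
    have hder : ∀ s, g.derivative.eval s =
        2 * fA l0 l1 l2 l3 l4 n (φ s) * s + fB l0 l1 l2 l3 l4 n (φ s) := by
      intro s
      rw [hφ, hg]
      simp only [derivative_add, derivative_C_mul, derivative_X_pow, derivative_C, eval_add,
        eval_mul, eval_C, eval_pow, eval_X, eval_zero, fA, fB, Nat.cast_add, Nat.cast_mul, hqk,
        Nat.add_sub_cancel, Nat.cast_one, Nat.cast_ofNat, map_ofNat, map_zero, map_one, map_add,
        map_mul]
      rw [show 2*q+2-1 = 2*q+1 by omega, show q+2-1 = q+1 by omega]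
      simp
      ring
    obtain ⟨R, hR1, hR2⟩ := roots_of_sep g hg0 (by
      intro s hs
      rw [hder]
      rw [hev] at hs
      exact hdbl s _ _ rfl rfl hs)
    exact ⟨R, hR1.trans hdeg, fun s hs => by rw [← hev]; exact hR2 s hs⟩
  refine countA q hq (-(l4*(1-n*l2*l3)*l0*(1-l2)*n*l4)) (-(1-n*l3*l4)) (bet1 l0 l1 l2 l3 l4 n)
    (-(1-n*l3*l4)*(1-l4)*g20 l0 l1 l2 l3 l4 n) (eps2 l0 l1 l2 l3 l4 n) (eps1 l0 l1 l2 l3 l4 n)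
    (eps0 l0 l1 l2 l3 l4 n) ((l0*(1-n*l2*l3))*gam1 l0 l1 l2 l3 l4 n)
    ((l0*(1-n*l2*l3))*gam0 l0 l1 l2 l3 l4 n + (-(1-n*l0*l2*l3))*gam1 l0 l1 l2 l3 l4 n)
    ((-(1-n*l0*l2*l3))*gam0 l0 l1 l2 l3 l4 n) (n*l4^2*l0*(1-l1)) (-(n*l4^2*(l0-l1)))
    (relConst l0 l1 l2 l3 l4 n) ?_ (R.image φ) ?_ ?_
  · intro hz
    have e1 : ((l0*(1-n*l2*l3))*gam1 l0 l1 l2 l3 l4 n)^q =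
        (l1*(1-n*l3*l4))*gam1 l1 l2 l3 l4 l0 n := by
      rw [← hφ]
      simp only [gam1, g21, g11, g01, map_sub, map_add, map_mul, map_one, map_pow, map_neg, h.h0,
        h.h1, h.h2, h.h3, h.h4, h.hn, map_ofNat]
    have e2 : eps2 l0 l1 l2 l3 l4 n ^ (q-1) * eps2 l0 l1 l2 l3 l4 n =
        eps2 l1 l2 l3 l4 l0 n := by
      rw [← pow_succ, Nat.sub_add_cancel (by omega), ← hφ]
      simp only [eps2, g12, g22, map_sub, map_add, map_mul, map_one, map_pow, map_neg, h.h0,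
        h.h1, h.h2, h.h3, h.h4, h.hn, map_ofNat]
    have e3 := relLead l0 l1 l2 l3 l4 n
    rw [e1] at hz
    have e4 : (-(l4*(1-n*l2*l3)*l0*(1-l2)*n*l4)) *
        (l0^5*l1^2*l4^4*n^3*(1-l1)*(1-l2)*(1-l3)*(1-l4)*(l2-l0)*(1-n*l2*l3)^2*(1-n*l3*l4)^3)
        = 0 := by
      rw [← e3, ← e2]
      linear_combination eps2 l0 l1 l2 l3 l4 n * hz
    refine mul_ne_zero (neg_ne_zero.2 ?_) ?_ e4
    · exact mul_ne_zero (mul_ne_zero (mul_ne_zero (mul_ne_zero (mul_ne_zero hl4 u23) hl0) o2) n0)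
        hl4
    · refine mul_ne_zero (mul_ne_zero (mul_ne_zero (mul_ne_zero (mul_ne_zero (mul_ne_zero
        (mul_ne_zero ?_ o1) o2) o3) o4) d02) (pow_ne_zero _ u23)) (pow_ne_zero _ u34)
      exact mul_ne_zero (mul_ne_zero (mul_ne_zero (pow_ne_zero _ hl0) (pow_ne_zero _ hl1))
        (pow_ne_zero _ hl4)) (pow_ne_zero _ n0)
  · rw [Finset.card_image_of_injective _ φ.injective, hRc]
  · intro t ht
    obtain ⟨s, hs, hst⟩ := Finset.mem_image.1 ht
    have hG := hR s hs
    rw [hst] at hG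
    refine ⟨ht0 s t _ hst rfl hG, hw s t _ hst rfl hG,
      fA l0 l1 l2 l3 l4 n t * (l4*(1-n*l2*l3)*s-(1-n*l2*l3*l4)), relV l0 l1 l2 l3 l4 n s t hG, ?_⟩
    have hM0 := (hM s t (φ t) hst rfl hG).2
    have e := relM l0 l1 l2 l3 l4 n s t (φ t)
    rw [hM0, mul_zero] at e
    have e5 : (fA l0 l1 l2 l3 l4 n t * (l4*(1-n*l2*l3)*s-(1-n*l2*l3*l4)))^q =
        ((n*l4^2*l0*(1-l1))*t + (-(n*l4^2*(l0-l1))))^q *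
        ((l0*(1-n*l3*l4)*t-(1-n*l3*l4*l0)) * (l1*(1-n*l3*l4)*(φ t)-(1-n*l1*l3*l4))) := by
      rw [relA, mul_assoc, mul_pow]
      congr 1
      rw [← hφ]
      simp only [map_sub, map_add, map_mul, map_one, map_neg, h.h0, h.h2, h.h3, h.h4, h.hn, hst]
      ring
    rw [e5]
    simp only [bet1]
    linear_combination (((n*l4^2*l0*(1-l1))*t + (-(n*l4^2*(l0-l1))))^q) * e

end main
end Aux17

namespace Aux17
section fixp
variable {k : Type*} [Field k]

theorem fix5 (φ : k →+* k) {l0 l1 l2 l4 b0 b1 b2 b3 b4 s t T S : k}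
    (h0 : φ l0 = l1) (h1 : φ l1 = l2) (h4 : φ l4 = l0)
    (c0 : φ b0 = b1) (c1 : φ b1 = b2) (c2 : φ b2 = b3) (c4 : φ b4 = b0)
    (hs : φ s = t) (ht : φ t = T) (hT : φ T = S)
    (hA : eqA l0 l1 l2 l4 (b0*b1*b2*b3*b4) s t T = 0)
    (hD : l2 * S * fZ l0 l1 s t T - l1 * fY l0 s t * (T - 1) = 0)
    (x : k) (hx : x - s*l4*b4 * φ x + l4*b4*b0*(s-1) * φ (φ x) = 0) :
    φ (φ (φ (φ (φ x)))) = x := by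
  have r1 := congrArg φ hx
  have r2 := congrArg φ r1
  have r3 := congrArg φ r2
  simp only [map_sub, map_add, map_mul, map_one, map_zero, h0, h1, h4, c0, c1, c2, c4,
    hs, ht, hT] at r1 r2 r3
  set x1 := φ x
  set x2 := φ x1
  set x3 := φ x2
  set x4 := φ x3
  set x5 := φ x4
  simp only [eqA, fe1, fY] at hA
  simp only [fZ, fY] at hD
  linear_combination (-1) * hx - s*l4*b4 * r1 + (l4*b4*b0*(s-1-l0*s*t)) * r2
    + (l4*b4*b0*b1*(l1*(s-1-l0*s*t)*T + l0*s*(t-1))) * r3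
    + (l4*b4*b0*b1*b2*x4 - b0*b1*b2*b3*b4*l4*x5) * hD - x5 * hA

end fixp

section lam
open Polynomial

theorem mem_range_of_pow {K k : Type*} [Field K] [Fintype K] [Field k] [Algebra K k] (y : k)
    (hy : y ^ Fintype.card K = y) : ∃ x : K, algebraMap K k x = y := by
  classical
  have hQ : 1 < Fintype.card K := Fintype.one_lt_card
  have h0 : (X ^ Fintype.card K - X : k[X]) ≠ 0 := FiniteField.X_pow_card_sub_X_ne_zero k hQ
  have hsub : (Finset.univ : Finset K).image (algebraMap K k) ⊆
      (X ^ Fintype.card K - X : k[X]).roots.toFinset := by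
    intro z hz
    obtain ⟨x, -, rfl⟩ := Finset.mem_image.1 hz
    rw [Multiset.mem_toFinset, mem_roots h0]
    simp [← map_pow, FiniteField.pow_card]
  have hcard : ((X ^ Fintype.card K - X : k[X]).roots.toFinset).card ≤
      ((Finset.univ : Finset K).image (algebraMap K k)).card := by
    rw [Finset.card_image_of_injective _ (algebraMap K k).injective, Finset.card_univ]
    refine (Multiset.toFinset_card_le _).trans ((card_roots' _).trans ?_)
    rw [FiniteField.X_pow_card_sub_X_natDegree_eq k hQ]
  have heq := Finset.eq_of_subset_of_card_le hsub hcard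
  have : y ∈ (Finset.univ : Finset K).image (algebraMap K k) := by
    rw [heq, Multiset.mem_toFinset, mem_roots h0]
    simp [hy]
  obtain ⟨x, -, hx⟩ := Finset.mem_image.1 this
  exact ⟨x, hx⟩

theorem lin_deg {k : Type*} [Field k] (q : ℕ) (hq : 2 ≤ q) (m d : k) (hd : d ≠ 0) :
    (C d * X^(q^2) + (C m * X^q + X)).natDegree = q^2 := by
  rw [natDegree_add_eq_left_of_natDegree_lt, natDegree_C_mul_X_pow _ _ hd]
  rw [natDegree_C_mul_X_pow _ _ hd]
  have : q < q^2 := by nlinarith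
  refine lt_of_le_of_lt (natDegree_add_le_of_degree_le (n := q) (natDegree_C_mul_X_pow_le _ _) ?_)
    this
  exact natDegree_X_le.trans (by omega)

theorem dep_of_det {K : Type*} [Field K] (u v : K × K) (h : u.1 * v.2 = u.2 * v.1) :
    ¬ LinearIndependent K ![u, v] := by
  intro hli
  rw [LinearIndependent.pair_iff] at hli
  have h1 := hli v.1 (-u.1) (by ext <;> simp <;> first | (ring1) | (linear_combination (norm := ring1) h) | (linear_combination (norm := ring1) (-1) * h))
  have h2 := hli v.2 (-u.2) (by ext <;> simp <;> first | (ring1) | (linear_combination (norm := ring1) h) | (linear_combination (norm := ring1) (-1) * h))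
  have hu : u = 0 := Prod.ext (by simpa using h1.2) (by simpa using h2.2)
  have := (hli 1 0 (by simp [hu])).1
  exact one_ne_zero this

theorem lam_fixed {K : Type*} [Field K] [Fintype K] (F : Subfield K) (p m q : ℕ)
    [Fact p.Prime] (hqp : q = p ^ m) (hm : 0 < m) [CharP K p]
    (hK : Fintype.card K = q ^ 5) (hF : Nat.card F = q) (α β : K) (hα : α ≠ 0) (hβ : β ≠ 0)
    (hms : IsMaxScattered q F α β) :
    (α ^ q / β ^ (q + 1)) ^ q = α ^ q / β ^ (q + 1) := by
  classical
  by_contra hne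
  have hp2 : 2 ≤ p := (Fact.out : p.Prime).two_le
  have hq2 : 2 ≤ q := by
    rw [hqp]; exact hp2.trans (Nat.le_self_pow hm.ne' p)
  let k := AlgebraicClosure K
  let ι : K →+* k := algebraMap K k
  have : CharP k p := charP_of_injective_algebraMap (algebraMap K k).injective p
  have : ExpChar k p := ExpChar.prime Fact.out
  let φ : k →+* k := iterateFrobenius k p m
  have hφ : ∀ x, φ x = x ^ q := fun x => by rw [hqp]; exact iterateFrobenius_def ..
  have hqk : (q : k) = 0 := by
    rw [hqp, Nat.cast_pow, CharP.cast_eq_zero, zero_pow hm.ne']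
  have hφ5 : ∀ x : k, φ (φ (φ (φ (φ x)))) = x ^ Fintype.card K := by
    intro x
    simp only [hφ, ← pow_mul, hK]
    congr 1; ring
  have hι5 : ∀ x : K, φ (φ (φ (φ (φ (ι x))))) = ι x := by
    intro x
    rw [hφ5, ← map_pow, FiniteField.pow_card]
  set l : K := α ^ q / β ^ (q + 1) with hl
  set b0 : k := ι β with hb0
  set b1 := φ b0 with hb1
  set b2 := φ b1 with hb2
  set b3 := φ b2 with hb3
  set b4 := φ b3 with hb4
  have hb5 : φ b4 = b0 := hι5 β
  set l0 : k := ι l with hl0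
  set l1 := φ l0 with hl1
  set l2 := φ l1 with hl2
  set l3 := φ l2 with hl3
  set l4 := φ l3 with hl4
  have hl5 : φ l4 = l0 := hι5 l
  have hιz : ∀ x : K, x ≠ 0 → ι x ≠ 0 := fun x hx => (map_ne_zero ι).2 hx
  have hφz : ∀ x : k, x ≠ 0 → φ x ≠ 0 := fun x hx => (map_ne_zero φ).2 hx
  have b0z : b0 ≠ 0 := hιz β hβ
  have b1z := hφz _ b0z
  have b2z := hφz _ b1z
  have b3z := hφz _ b2z
  have b4z := hφz _ b3z
  have ha : ι α = l4 * b4 * b0 := by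
    have e : φ (ι α) = l0 * b0 * b1 := by
      rw [hφ, hl0, hb1, hφ, hb0, ← map_pow, ← map_pow, ← map_mul, ← map_mul]
      congr 1
      rw [hl, pow_succ]; field_simp
    have e2 := congrArg (fun z => φ (φ (φ (φ z)))) e
    simp only [map_mul] at e2
    rw [hι5] at e2
    have e3 : φ (φ (φ (φ b1))) = b0 := hb5
    rw [e2, e3]
  have hcyc : Cyc φ l0 l1 l2 l3 l4 (b0*b1*b2*b3*b4) := by
    refine ⟨rfl, rfl, rfl, rfl, hl5, ?_, ?_, ?_⟩
    · simp only [map_mul]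
      rw [hb5]; ring
    · exact mul_ne_zero (mul_ne_zero (mul_ne_zero (mul_ne_zero b0z b1z) b2z) b3z) b4z
    · intro e
      rw [hl1, hφ, hl0, ← map_pow] at e
      exact hne (ι.injective e).symm
  refine hcyc.main q hq2 hqk hφ ?_
  intro s t T S hs ht hT hs1 hA hD
  have key := fix5 φ (l0 := l0) (l1 := l1) (l2 := l2) (l4 := l4) rfl rfl hl5
    rfl rfl rfl hb5 hs ht hT hA hD
  have l4z : l4 ≠ 0 := hcyc.sh.sh.sh.sh.z
  set d : k := l4*b4*b0*(s-1) with hd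
  have hdz : d ≠ 0 := mul_ne_zero (mul_ne_zero (mul_ne_zero l4z b4z) b0z) (sub_ne_zero.2 hs1)
  set P : k[X] := C d * X^(q^2) + (C (-(s*l4*b4)) * X^q + X) with hP
  have hPdeg : P.natDegree = q^2 := lin_deg q hq2 _ _ hdz
  have hqq : q < q^2 := by nlinarith
  have hP0 : P ≠ 0 := by
    intro h0; rw [h0, natDegree_zero] at hPdeg; omega
  obtain ⟨R, hRc, hR⟩ := roots_of_sep P hP0 (by
    intro x _
    rw [hP]
    simp [derivative_X_pow, hqk])
  rw [hPdeg] at hRc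
  have hRK : ∀ y ∈ R, ∃ x : K, ι x = y ∧
      ι (x - α * x ^ q ^ 2) = s*l4*b4 * ι (x ^ q - β * x ^ q ^ 2) := by
    intro y hy
    have e := hR y hy
    rw [hP] at e
    simp only [eval_add, eval_mul, eval_C, eval_pow, eval_X] at e
    have e' : y - s*l4*b4 * φ y + d * φ (φ y) = 0 := by
      rw [hφ (φ y), hφ y, ← pow_mul, ← pow_two]; linear_combination e
    have := key y e'
    rw [hφ5] at this
    obtain ⟨x, hx⟩ := mem_range_of_pow y this
    refine ⟨x, hx, ?_⟩
    have hx' : ι x = y := hx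
    rw [map_sub, map_sub, map_mul, map_mul, map_pow, map_pow, hx', ha]
    linear_combination e
  obtain ⟨x0, hx0, hx0z⟩ : ∃ x ∈ R, x ≠ 0 := by
    by_contra hcon
    push Not at hcon
    have : R ⊆ {0} := fun x hx => by simpa using hcon x hx
    have := Finset.card_le_card this
    simp at this
    omega
  have : Fintype F := Fintype.ofFinite F
  obtain ⟨y0, hy0, hy0F⟩ : ∃ y ∈ R, y ∉ (Finset.univ : Finset F).image (fun f : F => ι (f : K) * x0) := by
    by_contra hcon
    push Not at hcon
    have h1 := Finset.card_le_card (show R ⊆ _ from hcon)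
    have h2 := h1.trans Finset.card_image_le
    rw [Finset.card_univ, ← Nat.card_eq_fintype_card, hF] at h2
    omega
  obtain ⟨x, hx, hTx⟩ := hRK x0 hx0
  obtain ⟨y, hy, hTy⟩ := hRK y0 hy0
  have hxz : x ≠ 0 := by rintro rfl; exact hx0z (by rw [← hx, map_zero])
  have hyz : y ≠ 0 := by
    rintro rfl
    apply hy0F
    rw [Finset.mem_image]
    exact ⟨0, Finset.mem_univ _, by rw [← hy]; simp⟩
  have hdep : ¬ LinearIndependent K ![Tmap q α β x, Tmap q α β y] := by
    apply dep_of_det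
    apply ι.injective
    simp only [Tmap]
    rw [map_mul, map_mul, hTx, hTy]; ring
  have hmem := hms.2 x y hxz hyz hdep
  apply hy0F
  rw [Finset.mem_image]
  refine ⟨⟨y / x, hmem⟩, Finset.mem_univ _, ?_⟩
  rw [← hx, ← hy, ← map_mul]
  congr 1
  field_simp

end lam
end Aux17

namespace Aux17
section eqv
open Polynomial

theorem lin5_zero {K : Type*} [Field K] [Fintype K] (q : ℕ) (hq : 2 ≤ q)
    (hK : Fintype.card K = q ^ 5) (c : ℕ → K)
    (h : ∀ x : K, ∑ i ∈ Finset.range 5, c i * x ^ q ^ i = 0) (j : ℕ) (hj : j < 5) : c j = 0 := by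
  classical
  set P : K[X] := ∑ i ∈ Finset.range 5, C (c i) * X ^ q ^ i with hP
  have hdeg : P.natDegree < Fintype.card K := by
    rw [hK]
    refine lt_of_le_of_lt (natDegree_sum_le_of_forall_le (n := q ^ 4) _ _ ?_)
      (Nat.pow_lt_pow_right (by omega) (by omega))
    intro i hi
    rw [Finset.mem_range] at hi
    exact (natDegree_C_mul_X_pow_le _ _).trans (Nat.pow_le_pow_right (by omega) (by omega))
  have hP0 : P = 0 := by
    refine eq_zero_of_natDegree_lt_card_of_eval_eq_zero P (f := fun x : K => x)
      (fun _ _ e => e) ?_ hdeg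
    intro x
    rw [hP, eval_finsetSum]
    simpa using h x
  have hc := congrArg (fun Q : K[X] => Q.coeff (q ^ j)) hP0
  simp only [hP, finsetSum_coeff, coeff_C_mul_X_pow, coeff_zero] at hc
  rw [Finset.sum_eq_single j] at hc
  · simpa using hc
  · intro i _ hij
    rw [if_neg]
    intro e
    exact hij (Nat.pow_right_injective hq e).symm
  · intro hn
    exact absurd (Finset.mem_range.2 hj) hn

theorem fwd_alg {K : Type*} [Field K] (φ : K →+* K) {t0 t1 t2 t3 t4 a b b1 b2 b3 b4 : K}
    (h0 : φ t0 = t1) (h1 : φ t1 = t2) (h2 : φ t2 = t3) (h3 : φ t3 = t4) (h4 : φ t4 = t0)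
    (c0 : φ b = b1) (c1 : φ b1 = b2) (c2 : φ b2 = b3) (c3 : φ b3 = b4) (hb : b ≠ 0)
    (t0z : t0 ≠ 0) (ha : a = t2 * t3 * t4) (hbt : b * t1 = -(1 + t0*t1*t2*t3*t4)) :
    (φ a / (b1 * b)) ^ 5 * (b * b1 * b2 * b3 * b4) ^ 2 +
      (φ a / (b1 * b)) * (1 - 3 * (φ a / (b1 * b))) * (b * b1 * b2 * b3 * b4) + 1 = 0 := by
  have t1z : t1 ≠ 0 := h0 ▸ (map_ne_zero φ).2 t0z
  have t2z : t2 ≠ 0 := h1 ▸ (map_ne_zero φ).2 t1z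
  have t3z : t3 ≠ 0 := h2 ▸ (map_ne_zero φ).2 t2z
  have t4z : t4 ≠ 0 := h3 ▸ (map_ne_zero φ).2 t3z
  have hφa : φ a = t3 * t4 * t0 := by rw [ha, map_mul, map_mul, h2, h3, h4]
  obtain ⟨N, hN⟩ : ∃ N, N = t0*t1*t2*t3*t4 := ⟨_, rfl⟩
  have hφN : φ N = N := by
    rw [hN]; simp only [map_mul, h0, h1, h2, h3, h4]; ring
  rw [← hN] at hbt
  have e1 : b1 * t2 = -(1 + N) := by
    have := congrArg φ hbt; simpa only [map_mul, map_neg, map_add, map_one, hφN, c0, h1] using this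
  have e2 : b2 * t3 = -(1 + N) := by
    have := congrArg φ e1; simpa only [map_mul, map_neg, map_add, map_one, hφN, c1, h2] using this
  have e3 : b3 * t4 = -(1 + N) := by
    have := congrArg φ e2; simpa only [map_mul, map_neg, map_add, map_one, hφN, c2, h3] using this
  have e4 : b4 * t0 = -(1 + N) := by
    have := congrArg φ e3; simpa only [map_mul, map_neg, map_add, map_one, hφN, c3, h4] using this
  have Nz : N ≠ 0 := by
    rw [hN]
    exact mul_ne_zero (mul_ne_zero (mul_ne_zero (mul_ne_zero t0z t1z) t2z) t3z) t4z
  have N1 : 1 + N ≠ 0 := by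
    intro e; rw [e, neg_zero] at hbt
    exact (mul_ne_zero hb t1z) hbt
  have hb1z : b1 ≠ 0 := c0 ▸ (map_ne_zero φ).2 hb
  have hl : φ a / (b1 * b) = N / (1 + N) ^ 2 := by
    rw [hφa, div_eq_div_iff (mul_ne_zero hb1z hb) (pow_ne_zero 2 N1)]
    have : (1 + N) ^ 2 = (b * t1) * (b1 * t2) := by rw [hbt, e1]; ring
    rw [this, hN]; ring
  have hn : b * b1 * b2 * b3 * b4 = -(1 + N) ^ 5 / N := by
    rw [eq_div_iff Nz]
    have : b * b1 * b2 * b3 * b4 * N = (b*t1)*(b1*t2)*(b2*t3)*(b3*t4)*(b4*t0) := by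
      rw [hN]; ring
    rw [this, hbt, e1, e2, e3, e4]; ring
  rw [hl, hn]
  field_simp
  ring

theorem forward {K : Type*} [Field K] [Fintype K] (q : ℕ) (hq : 2 ≤ q)
    (hK : Fintype.card K = q ^ 5) (φ : K →+* K) (hφ : ∀ x, φ x = x ^ q)
    (α β η : K) (hβ : β ≠ 0) (h : IsEquivToL q α β η 2) :
    (α ^ q / β ^ (q + 1)) ^ 5 * (β ^ (1 + q + q ^ 2 + q ^ 3 + q ^ 4)) ^ 2 +
      (α ^ q / β ^ (q + 1)) * (1 - 3 * (α ^ q / β ^ (q + 1))) *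
        β ^ (1 + q + q ^ 2 + q ^ 3 + q ^ 4) + 1 = 0 := by
  obtain ⟨τ, M, hM⟩ := h
  have p2 : ∀ x, φ (φ x) = x ^ q ^ 2 := fun x => by simp only [hφ, ← pow_mul]; congr 1; ring
  have p3 : ∀ x, φ (φ (φ x)) = x ^ q ^ 3 := fun x => by
    simp only [hφ, ← pow_mul]; congr 1; ring
  have p4 : ∀ x, φ (φ (φ (φ x))) = x ^ q ^ 4 := fun x => by
    simp only [hφ, ← pow_mul]; congr 1; ring
  have p5 : ∀ x, φ (φ (φ (φ (φ x)))) = x := fun x => by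
    have : φ (φ (φ (φ (φ x)))) = x ^ q ^ 5 := by simp only [hφ, ← pow_mul]; congr 1; ring
    rw [this, ← hK, FiniteField.pow_card]
  apply τ.injective
  set a := τ α with ha
  set b := τ β with hb
  have hbz : b ≠ 0 := (map_ne_zero τ).2 hβ
  obtain ⟨A, hA⟩ : ∃ A, A = (M (1, 0)).1 := ⟨_, rfl⟩
  obtain ⟨A2, hA2⟩ : ∃ A, A = (M (1, 0)).2 := ⟨_, rfl⟩
  obtain ⟨B, hB⟩ : ∃ A, A = (M (0, 1)).1 := ⟨_, rfl⟩
  obtain ⟨B2, hB2⟩ : ∃ A, A = (M (0, 1)).2 := ⟨_, rfl⟩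
  have hMuv : ∀ u v : K, M (u, v) = (u * A + v * B, u * A2 + v * B2) := by
    intro u v
    have : ((u, v) : K × K) = u • (1, 0) + v • (0, 1) := by ext <;> simp
    rw [this, map_add, map_smul, map_smul]
    ext <;> simp [hA, hA2, hB, hB2]
  obtain ⟨D, hD⟩ : ∃ D, D = -(a * A + b * B) := ⟨_, rfl⟩
  have hz : ∀ x : K, x * A2 + φ x * B2 - φ (φ x) * (a * A2 + b * B2) =
      η * φ (φ (A * x + B * φ x + D * φ (φ x))) + φ (φ (φ (A * x + B * φ x + D * φ (φ x)))) := by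
    intro x
    have hmem : M (x - a * φ (φ x), φ x - b * φ (φ x)) ∈
        {p : K × K | ∃ z : K, p = (z, η * z ^ q ^ 2 + z ^ q ^ (5 - 2))} := by
      rw [← hM]
      refine ⟨_, ⟨τ.symm x, ?_⟩, rfl⟩
      rw [RingEquiv.apply_symm_apply, p2, hφ]
    obtain ⟨z, hz⟩ := hmem
    rw [hMuv, Prod.mk.injEq] at hz
    obtain ⟨z1, z2⟩ := hz
    have hzz : z = A * x + B * φ x + D * φ (φ x) := by rw [← z1, hD]; ring
    rw [← hzz, p3 z, p2 z]
    rw [show 5 - 2 = 3 from rfl] at z2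
    rw [← z2]; ring
  let c : ℕ → K := fun i => match i with
    | 0 => A2 - φ (φ (φ D))
    | 1 => B2
    | 2 => -(a * A2 + b * B2) - η * φ (φ A)
    | 3 => -(η * φ (φ B) + φ (φ (φ A)))
    | _ => -(η * φ (φ D) + φ (φ (φ B)))
  have hc := lin5_zero q hq hK c (by
    intro x
    have e := hz x
    simp only [map_add, map_mul, p5] at e
    simp only [Finset.sum_range_succ, Finset.sum_range_zero, c]
    rw [← p2, ← p3, ← p4, pow_zero, pow_one, pow_one, ← hφ]
    linear_combination e)
  have k0 : A2 - φ (φ (φ D)) = 0 := hc 0 (by norm_num)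
  have k1 : B2 = 0 := hc 1 (by norm_num)
  have k2 : -(a * A2 + b * B2) - η * φ (φ A) = 0 := hc 2 (by norm_num)
  have k3 : -(η * φ (φ B) + φ (φ (φ A))) = 0 := hc 3 (by norm_num)
  have k4 : -(η * φ (φ D) + φ (φ (φ B))) = 0 := hc 4 (by norm_num)
  have hφz : ∀ x : K, x ≠ 0 → φ x ≠ 0 := fun x hx => (map_ne_zero φ).2 hx
  have Bz : B ≠ 0 := by
    intro e
    have : M (0, 1) = 0 := by rw [hMuv, e, k1]; simp
    have := (map_eq_zero_iff M M.injective).1 this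
    simp at this
  have ηz : η ≠ 0 := by
    rintro rfl
    have : φ (φ (φ B)) = 0 := by linear_combination (-1) * k4
    exact hφz _ (hφz _ (hφz _ Bz)) this
  have Az : A ≠ 0 := by
    rintro rfl
    simp only [map_zero, add_zero] at k3
    exact mul_ne_zero ηz (hφz _ (hφz _ Bz)) (neg_eq_zero.1 k3)
  set A_1 := φ A with hA1
  set A_2 := φ A_1 with hA2'
  set A_3 := φ A_2 with hA3
  set A_4 := φ A_3 with hA4
  have hA5 : φ A_4 = A := p5 A
  set B_1 := φ B with hB1
  set B_2 := φ B_1 with hB2'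
  set B_3 := φ B_2 with hB3
  set B_4 := φ B_3 with hB4
  have hB5 : φ B_4 = B := p5 B
  have A1z : A_1 ≠ 0 := hφz _ Az
  have A2z : A_2 ≠ 0 := hφz _ A1z
  have A3z : A_3 ≠ 0 := hφz _ A2z
  have A4z : A_4 ≠ 0 := hφz _ A3z
  have B1z : B_1 ≠ 0 := hφz _ Bz
  have B2z : B_2 ≠ 0 := hφz _ B1z
  have B3z : B_3 ≠ 0 := hφz _ B2z
  have B4z : B_4 ≠ 0 := hφz _ B3z
  have d2 : A_3 * φ (φ D) = B_2 * B_3 := by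
    linear_combination (-1) * φ (φ D) * k3 + B_2 * k4
  have d3 : A_4 * φ (φ (φ D)) = B_3 * B_4 := by
    have := congrArg φ d2; simpa only [map_mul] using this
  have d0 : A_1 * D = B * B_1 := by
    have := congrArg φ (congrArg φ d3)
    simp only [map_mul, p5] at this
    rw [hA5, hB5] at this
    linear_combination this
  have aa : a * (B_2 * B_3 * B_4) = A_2 * A_3 * A_4 := by
    linear_combination (-B_2 * a) * d3 - a * B_2 * A_4 * k0 - B_2 * A_4 * k2
      - B_2 * A_4 * b * k1 + A_2 * A_4 * k3
  have E := fwd_alg φ (t0 := A / B) (t1 := A_1 / B_1) (t2 := A_2 / B_2) (t3 := A_3 / B_3)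
    (t4 := A_4 / B_4) (a := a) (b := b) (map_div₀ ..) (map_div₀ ..) (map_div₀ ..) (map_div₀ ..)
    (by rw [map_div₀, hA5, hB5]) rfl rfl rfl rfl hbz (div_ne_zero Az Bz)
    (by field_simp; linear_combination aa)
    (by
      field_simp
      linear_combination (-B_2*B_3*B_4) * d0 + (A_1 * B_2*B_3*B_4) * hD - A*A_1* aa)
  simp only [map_add, map_mul, map_sub, map_pow, map_div₀, map_one, map_zero, map_ofNat]
  rw [← ha, ← hb]
  have hn : b ^ (1 + q + q ^ 2 + q ^ 3 + q ^ 4) =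
      b * φ b * φ (φ b) * φ (φ (φ b)) * φ (φ (φ (φ b))) := by
    rw [p4, p3, p2, hφ]; ring
  have hd : b ^ (q + 1) = φ b * b := by rw [hφ]; ring
  rw [hn, hd, ← hφ a]
  exact E

end eqv
end Aux17

namespace Aux17
section bwd

theorem bwd_alg {K : Type*} [Field K] (l n : K) (hl : l ≠ 0) (hl1 : l ≠ 1) (hn : n ≠ 0)
    (h : l ^ 5 * n ^ 2 + l * (1 - 3 * l) * n + 1 = 0) (u : K)
    (hu : u = (l - 1 / (n * l)) / (1 - l)) :
    u * (1 - u) = l ∧ n * u ^ 3 * l = -1 := by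
  have h1 : 1 - l ≠ 0 := sub_ne_zero.2 (Ne.symm hl1)
  have e1 : u * (1 - u) = l := by
    rw [hu]
    field_simp
    linear_combination (-1) * h
  refine ⟨e1, ?_⟩
  have e2 : u * (1 - l) - l = - (1 / (n * l)) := by rw [hu]; field_simp; ring
  have e3 : u ^ 3 = u * (1 - l) - l := by linear_combination (-u - 1) * e1
  rw [e3, e2]; field_simp

theorem backward {K : Type*} [Field K] [Fintype K] (q : ℕ)
    (hK : Fintype.card K = q ^ 5) (φ : K →+* K) (hφ : ∀ x, φ x = x ^ q)
    (α β l : K) (hα : α ≠ 0) (hβ : β ≠ 0) (hl : l = α ^ q / β ^ (q + 1)) (hl1 : l ≠ 1)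
    (hlf : l ^ q = l) (hinj : Function.Injective (Tmap q α β))
    (h : l ^ 5 * (β ^ (1 + q + q ^ 2 + q ^ 3 + q ^ 4)) ^ 2 +
        l * (1 - 3 * l) * β ^ (1 + q + q ^ 2 + q ^ 3 + q ^ 4) + 1 = 0) :
    ∃ η : K, IsEquivToL q α β η 2 := by
  have p2 : ∀ x, φ (φ x) = x ^ q ^ 2 := fun x => by simp only [hφ, ← pow_mul]; congr 1; ring
  have p3 : ∀ x, φ (φ (φ x)) = x ^ q ^ 3 := fun x => by
    simp only [hφ, ← pow_mul]; congr 1; ring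
  have p4 : ∀ x, φ (φ (φ (φ x))) = x ^ q ^ 4 := fun x => by
    simp only [hφ, ← pow_mul]; congr 1; ring
  have p5 : ∀ x, φ (φ (φ (φ (φ x)))) = x := fun x => by
    have : φ (φ (φ (φ (φ x)))) = x ^ q ^ 5 := by simp only [hφ, ← pow_mul]; congr 1; ring
    rw [this, ← hK, FiniteField.pow_card]
  rw [← hφ] at hlf
  have lz : l ≠ 0 := by rw [hl]; exact div_ne_zero (pow_ne_zero _ hα) (pow_ne_zero _ hβ)
  obtain ⟨n, hn⟩ : ∃ n, n = β ^ (1 + q + q ^ 2 + q ^ 3 + q ^ 4) := ⟨_, rfl⟩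
  have nz : n ≠ 0 := by rw [hn]; exact pow_ne_zero _ hβ
  rw [← hn] at h
  have hn' : n = β * φ β * φ (φ β) * φ (φ (φ β)) * φ (φ (φ (φ β))) := by
    rw [p4, p3, p2, hφ, hn]; ring
  have hnf : φ n = n := by
    rw [hn']; simp only [map_mul, p5]; ring
  obtain ⟨u, hu⟩ : ∃ u, u = (l - 1 / (n * l)) / (1 - l) := ⟨_, rfl⟩
  obtain ⟨u1, u2⟩ := bwd_alg l n lz hl1 nz h u hu
  have huf : φ u = u := by
    rw [hu]; simp only [map_div₀, map_sub, map_mul, map_one, hnf, hlf]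
  have uz : u ≠ 0 := by rintro rfl; exact lz (by rw [← u1]; ring)
  have hφz : ∀ x : K, x ≠ 0 → φ x ≠ 0 := fun x hx => (map_ne_zero φ).2 hx
  have hal : φ α = l * (φ β * β) := by
    rw [hφ, hφ, hl, pow_succ]; field_simp
  have hal' : α = l * β * φ (φ (φ (φ β))) := by
    have := congrArg φ (congrArg φ (congrArg φ (congrArg φ hal)))
    simp only [map_mul, p5, hlf] at this
    linear_combination this
  set b1 := φ β with hb1
  set b2 := φ b1 with hb2
  set b3 := φ b2 with hb3
  set b4 := φ b3 with hb4
  have hb5 : φ b4 = β := p5 β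
  have b1z : b1 ≠ 0 := hφz _ hβ
  have b2z : b2 ≠ 0 := hφz _ b1z
  have b3z : b3 ≠ 0 := hφz _ b2z
  have b4z : b4 ≠ 0 := hφz _ b3z
  obtain ⟨t0, ht0⟩ : ∃ t, t = -1 / (u * b4) := ⟨_, rfl⟩
  obtain ⟨t1, ht1⟩ : ∃ t, t = -1 / (u * β) := ⟨_, rfl⟩
  obtain ⟨t2, ht2⟩ : ∃ t, t = -1 / (u * b1) := ⟨_, rfl⟩
  obtain ⟨t3, ht3⟩ : ∃ t, t = -1 / (u * b2) := ⟨_, rfl⟩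
  obtain ⟨t4, ht4⟩ : ∃ t, t = -1 / (u * b3) := ⟨_, rfl⟩
  have f0 : φ t0 = t1 := by rw [ht0, ht1]; simp only [map_div₀, map_neg, map_one, map_mul, huf, hb5]
  have f1 : φ t1 = t2 := by rw [ht1, ht2]; simp only [map_div₀, map_neg, map_one, map_mul, huf, hb1]
  have f2 : φ t2 = t3 := by rw [ht2, ht3]; simp only [map_div₀, map_neg, map_one, map_mul, huf, hb2]
  have f3 : φ t3 = t4 := by rw [ht3, ht4]; simp only [map_div₀, map_neg, map_one, map_mul, huf, hb3]
  have f4 : φ t4 = t0 := by rw [ht4, ht0]; simp only [map_div₀, map_neg, map_one, map_mul, huf, hb4]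
  have t0z : t0 ≠ 0 := by rw [ht0]; exact div_ne_zero (by simp) (mul_ne_zero uz b4z)
  have t1z : t1 ≠ 0 := f0 ▸ hφz _ t0z
  have t2z : t2 ≠ 0 := f1 ▸ hφz _ t1z
  have t3z : t3 ≠ 0 := f2 ▸ hφz _ t2z
  have t4z : t4 ≠ 0 := f3 ▸ hφz _ t3z
  have ea : α = t2 * t3 * t4 := by
    rw [hal', ht2, ht3, ht4]
    field_simp
    rw [hn'] at u2
    linear_combination u2
  have ec : α * t0 + β = -(1 / t1) := by
    have e1 : 1 / t1 = - (u * β) := by rw [ht1]; field_simp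
    rw [e1, hal', ht0]
    field_simp
    linear_combination u1
  let M : (K × K) ≃ₗ[K] K × K :=
    { toFun := fun p => (t0 * p.1 + p.2, p.1 / t4)
      invFun := fun p => (t4 * p.2, p.1 - t0 * (t4 * p.2))
      map_add' := by intro x y; ext <;> simp <;> ring
      map_smul' := by intro c x; ext <;> simp <;> ring
      left_inv := by intro x; ext <;> simp <;> field_simp <;> ring
      right_inv := by intro x; ext <;> simp <;> field_simp }
  let Z : K → K := fun x => t0 * x + φ x + (1 / t1) * φ (φ x)
  have hMT : ∀ x : K, M (Tmap q α β x) = (Z x, -t3 * (Z x) ^ q ^ 2 + (Z x) ^ q ^ 3) := by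
    intro x
    change (t0 * (x - α * x ^ q ^ 2) + (x ^ q - β * x ^ q ^ 2), (x - α * x ^ q ^ 2) / t4) = _
    rw [← p2, ← hφ, ← p2 (Z x), ← p3 (Z x)]
    refine Prod.ext ?_ ?_
    · change _ = t0 * x + φ x + (1 / t1) * φ (φ x)
      linear_combination (-1) * φ (φ x) * ec
    · simp only [Z, map_add, map_mul, map_div₀, map_one, f0, f1, f2, f3, p5]
      rw [ea]
      field_simp
      ring
  have hZinj : Function.Injective Z := by
    intro x y e
    apply hinj
    apply M.injective
    rw [hMT, hMT, e]
  have hZsurj : Function.Surjective Z := Finite.surjective_of_injective hZinj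
  refine ⟨-t3, RingEquiv.refl K, M, ?_⟩
  ext p
  constructor
  · rintro ⟨_, ⟨x, rfl⟩, rfl⟩
    exact ⟨Z x, hMT x⟩
  · rintro ⟨z, rfl⟩
    obtain ⟨x, rfl⟩ := hZsurj z
    exact ⟨_, ⟨x, rfl⟩, hMT x⟩

end bwd
end Aux17


theorem stmt_17 (q : ℕ) (hq : ∃ p n : ℕ, Nat.Prime p ∧ 0 < n ∧ q = p ^ n)
    (K : Type*) [Field K] (F : Subfield K)
    (hFcard : Nat.card F = q) (hKcard : Nat.card K = q ^ 5)
    (α β : K) (hαβ : α * β ≠ 0) (hne : α ^ q ≠ β ^ (q + 1))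
    (hms : IsMaxScattered q F α β)
    (l : K) (hl : l = α ^ q / β ^ (q + 1)) :
    (∃ η : K, IsEquivToL q α β η 2) ↔
      l ^ 5 * (β ^ (1 + q + q ^ 2 + q ^ 3 + q ^ 4)) ^ 2 +
        l * (1 - 3 * l) * β ^ (1 + q + q ^ 2 + q ^ 3 + q ^ 4) + 1 = 0 := by
  obtain ⟨p, m, hp, hm, hqp⟩ := hq
  have : Fact p.Prime := ⟨hp⟩
  have hq2 : 2 ≤ q := by
    rw [hqp]; exact hp.two_le.trans (Nat.le_self_pow hm.ne' p)
  have hfin : Finite K := Nat.finite_of_card_ne_zero (by rw [hKcard]; positivity)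
  have : Fintype K := Fintype.ofFinite K
  have hK : Fintype.card K = q ^ 5 := by rw [← Nat.card_eq_fintype_card, hKcard]
  have : CharP K p := charP_of_card_eq_prime_pow (p := p) (f := m * 5)
    (by rw [hK, hqp, pow_mul])
  have : ExpChar K p := ExpChar.prime hp
  have hφ : ∀ x : K, iterateFrobenius K p m x = x ^ q := fun x => by
    rw [hqp]; exact iterateFrobenius_def ..
  have hα : α ≠ 0 := left_ne_zero_of_mul hαβ
  have hβ : β ≠ 0 := right_ne_zero_of_mul hαβ
  constructor
  · rintro ⟨η, h⟩
    rw [hl]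
    exact Aux17.forward q hq2 hK (iterateFrobenius K p m) hφ α β η hβ h
  · intro h
    have hlf := Aux17.lam_fixed F p m q hqp hm hK hFcard α β hα hβ hms
    rw [← hl] at hlf
    refine Aux17.backward q hK (iterateFrobenius K p m) hφ α β l hα hβ hl ?_ hlf hms.1 h
    intro e
    rw [e, eq_div_iff (pow_ne_zero _ hβ), one_mul] at hl
    exact hne hl.symm
end
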